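/- arXiv:2204.11069 — 8 statements merged into one kernel-verified Lean document; each statement's English description precedes it below -/
import Mathlib

section
/- Let h : ℝ → ℝ be nondecreasing and square-integrable with respect to the standard Gaussian measure N(0,1). Then for every ξ ∈ ℝ and every u ∈ (0,1], the integral ∫_ℝ ( ∫_0^{ξ+ζ} |h(x)| dx ) p(u,ζ) dζ is finite, where p(u,ζ) = (2πu)^{-1/2} exp(−ζ²/(2u)) is the density of N(0,u). -/
open MeasureTheory ProbabilityTheory

/-- The density of the centered Gaussian distribution `N(0,u)`. -/
noncomputable def gaussDensity (u ζ : ℝ) : ℝ :=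
  (Real.sqrt (2 * Real.pi * u))⁻¹ * Real.exp (-ζ ^ 2 / (2 * u))

/-!
If `0 < t` and `1 ≤ t ^ p * w`, then `a ≤ t * (a ^ p * w + 1)` for all `a ≥ 0`. For the weight
`w x = exp (-β x²)` the choice `t = exp (β y² / p)` is admissible at every `|x| ≤ |y|`, so a
function in `L^p` of that weight has a primitive that is
`O((1 + |y|) exp (β y² / p))`. This growth is beaten by `exp (-ζ² / (2u))` as soon as
`β / p < 1 / (2u)`, and a translation `y = ξ + ζ` does not matter: completing the square only
shifts the centre of the resulting Gaussian.
-/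

open Set Real

section WeightedPower

lemma self_le_rpow_add_one {p r : ℝ} (hp : 1 ≤ p) (hr : 0 ≤ r) : r ≤ r ^ p + 1 := by
  rcases le_total r 1 with h | h
  · linarith [rpow_nonneg hr p]
  · linarith [self_le_rpow_of_one_le h hp]

lemma le_mul_rpow_mul_add_one {p t a w : ℝ} (hp : 1 ≤ p) (ha : 0 ≤ a) (ht : 0 < t)
    (hw : 1 ≤ t ^ p * w) : a ≤ t * (a ^ p * w + 1) := by
  have hratio : (a / t) ^ p ≤ a ^ p * w := by
    rw [div_rpow ha ht.le, div_le_iff₀ (rpow_pos_of_pos ht p)]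
    calc a ^ p = a ^ p * 1 := (mul_one _).symm
      _ ≤ a ^ p * (t ^ p * w) := by gcongr
      _ = a ^ p * w * t ^ p := by ring
  calc a = t * (a / t) := by field_simp
    _ ≤ t * ((a / t) ^ p + 1) := by gcongr; exact self_le_rpow_add_one hp (by positivity)
    _ ≤ t * (a ^ p * w + 1) := by gcongr

variable {α : Type*} [MeasurableSpace α] {μ : Measure α} {s : Set α} {f w : α → ℝ} {p t : ℝ}

lemma aemeasurable_of_rpow_mul (hp : p ≠ 0) (hf : 0 ≤ f) (hw : AEMeasurable w μ)
    (hw0 : ∀ x, w x ≠ 0) (hfw : AEMeasurable (fun x ↦ f x ^ p * w x) μ) : AEMeasurable f μ := by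
  refine ((hfw.div hw).pow_const p⁻¹).congr (.of_forall fun x ↦ ?_)
  simp only [Pi.div_apply, mul_div_cancel_right₀ _ (hw0 x), rpow_rpow_inv (hf x) hp]

lemma integrableOn_of_rpow_mul (hp : 1 ≤ p) (hf : 0 ≤ f) (hfm : AEMeasurable f (μ.restrict s))
    (hs : MeasurableSet s) (hμs : μ s ≠ ⊤) (hfw : IntegrableOn (fun x ↦ f x ^ p * w x) s μ)
    (ht : 0 < t) (hw : ∀ x ∈ s, 1 ≤ t ^ p * w x) : IntegrableOn f s μ := by
  refine ((hfw.add (integrableOn_const hμs (C := 1))).const_mul t).mono' hfm.aestronglyMeasurable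
    (ae_restrict_of_forall_mem hs fun x hx ↦ ?_)
  rw [norm_of_nonneg (hf x)]
  exact le_mul_rpow_mul_add_one hp (hf x) ht (hw x hx)

lemma setIntegral_le_of_rpow_mul (hp : 1 ≤ p) (hf : 0 ≤ f) (hs : MeasurableSet s)
    (hμs : μ s ≠ ⊤) (hfw : IntegrableOn (fun x ↦ f x ^ p * w x) s μ) (ht : 0 < t)
    (hw : ∀ x ∈ s, 1 ≤ t ^ p * w x) :
    ∫ x in s, f x ∂μ ≤ t * ((∫ x in s, f x ^ p * w x ∂μ) + μ.real s) := by
  have hone : IntegrableOn (fun _ ↦ (1 : ℝ)) s μ := integrableOn_const hμs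
  calc ∫ x in s, f x ∂μ
      ≤ ∫ x in s, t * (f x ^ p * w x + 1) ∂μ :=
        integral_mono_of_nonneg (.of_forall hf) ((hfw.add hone).const_mul t)
          (ae_restrict_of_forall_mem hs fun x hx ↦
            le_mul_rpow_mul_add_one hp (hf x) ht (hw x hx))
    _ = t * ((∫ x in s, f x ^ p * w x ∂μ) + μ.real s) := by
        rw [integral_const_mul, integral_add hfw hone, setIntegral_const, smul_eq_mul, mul_one]

end WeightedPower

section GaussianWeight

variable {f : ℝ → ℝ} {p β : ℝ}

lemma one_le_exp_rpow_mul_exp_neg_mul_sq {x y : ℝ} (hp : p ≠ 0) (hβ : 0 ≤ β) (hxy : |x| ≤ |y|) :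
    1 ≤ exp (β / p * y ^ 2) ^ p * exp (-β * x ^ 2) := by
  rw [← exp_mul, ← exp_add, one_le_exp_iff]
  calc 0 ≤ β * (y ^ 2 - x ^ 2) := mul_nonneg hβ (sub_nonneg.mpr (sq_le_sq.mpr hxy))
    _ = β / p * y ^ 2 * p + -β * x ^ 2 := by field_simp; ring

lemma abs_le_abs_of_mem_uIoc_zero {x y : ℝ} (hx : x ∈ uIoc 0 y) : |x| ≤ |y| := by
  simpa using abs_sub_left_of_mem_uIcc (uIoc_subset_uIcc hx)

lemma intervalIntegrable_of_rpow_mul_exp_neg_mul_sq (hp : 1 ≤ p) (hβ : 0 ≤ β) (hf : 0 ≤ f)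
    (hfw : Integrable fun x ↦ f x ^ p * exp (-β * x ^ 2)) (a b : ℝ) :
    IntervalIntegrable f volume a b := by
  have hp0 : p ≠ 0 := by positivity
  have hfm : AEMeasurable f := aemeasurable_of_rpow_mul hp0 hf
    (by fun_prop) (fun x ↦ (exp_pos _).ne') hfw.aemeasurable
  have from_zero (y : ℝ) : IntervalIntegrable f volume 0 y :=
    intervalIntegrable_iff.mpr <| integrableOn_of_rpow_mul hp hf hfm.restrict measurableSet_uIoc
      (by simp) hfw.integrableOn (exp_pos _)
      fun x hx ↦ one_le_exp_rpow_mul_exp_neg_mul_sq hp0 hβ (abs_le_abs_of_mem_uIoc_zero hx)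
  exact (from_zero a).symm.trans (from_zero b)

lemma abs_intervalIntegral_le_of_rpow_mul_exp_neg_mul_sq (hp : 1 ≤ p) (hβ : 0 ≤ β) (hf : 0 ≤ f)
    (hfw : Integrable fun x ↦ f x ^ p * exp (-β * x ^ 2)) (y : ℝ) :
    |∫ x in (0 : ℝ)..y, f x| ≤
      exp (β / p * y ^ 2) * ((∫ x, f x ^ p * exp (-β * x ^ 2)) + |y|) := by
  have hp0 : p ≠ 0 := by positivity
  calc |∫ x in (0 : ℝ)..y, f x|
      = ∫ x in uIoc 0 y, f x := by
        rw [intervalIntegral.abs_integral_eq_abs_integral_uIoc,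
          abs_of_nonneg (integral_nonneg hf)]
    _ ≤ exp (β / p * y ^ 2) *
          ((∫ x in uIoc 0 y, f x ^ p * exp (-β * x ^ 2)) + volume.real (uIoc 0 y)) :=
        setIntegral_le_of_rpow_mul hp hf measurableSet_uIoc (by simp)
          hfw.integrableOn (exp_pos _) fun x hx ↦
            one_le_exp_rpow_mul_exp_neg_mul_sq hp0 hβ (abs_le_abs_of_mem_uIoc_zero hx)
    _ ≤ exp (β / p * y ^ 2) * ((∫ x, f x ^ p * exp (-β * x ^ 2)) + |y|) := by
        have hvol : volume.real (uIoc 0 y) = |y| := by simp [measureReal_def]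
        have hmass := setIntegral_le_integral (s := uIoc 0 y) hfw
          (.of_forall fun x ↦ mul_nonneg (rpow_nonneg (hf x) p) (exp_pos _).le)
        rw [hvol]
        exact mul_le_mul_of_nonneg_left (add_le_add_left hmass |y|) (exp_pos _).le

lemma integrable_add_abs_mul_exp_neg_mul_sq {k : ℝ} (hk : 0 < k) (C d : ℝ) :
    Integrable fun z : ℝ ↦ (C + |z + d|) * exp (-k * z ^ 2) := by
  have hgauss := integrable_exp_neg_mul_sq hk
  refine ((hgauss.const_mul C).add
    ((integrable_mul_exp_neg_mul_sq hk).add (hgauss.const_mul d)).abs).congr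
    (.of_forall fun z ↦ ?_)
  simp only [Pi.add_apply, ← add_mul, abs_mul, abs_exp]

lemma integrable_exp_mul_add_sq_mul_exp_neg_mul_sq {a b : ℝ} (hab : a < b) (C ξ : ℝ) :
    Integrable fun ζ : ℝ ↦
      exp (a * (ξ + ζ) ^ 2) * (C + |ξ + ζ|) * exp (-b * ζ ^ 2) := by
  have hk : 0 < b - a := sub_pos.mpr hab
  set m := a * ξ / (b - a) with hm
  have hsquare (ζ : ℝ) : a * (ξ + ζ) ^ 2 + -b * ζ ^ 2 =
      a * b * ξ ^ 2 / (b - a) + -(b - a) * (ζ - m) ^ 2 := by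
    rw [hm]; field_simp; ring
  refine (((integrable_add_abs_mul_exp_neg_mul_sq hk C (ξ + m)).comp_sub_right m).const_mul
    (exp (a * b * ξ ^ 2 / (b - a)))).congr (.of_forall fun ζ ↦ ?_)
  calc exp (a * b * ξ ^ 2 / (b - a)) * ((C + |ζ - m + (ξ + m)|) * exp (-(b - a) * (ζ - m) ^ 2))
      = (C + |ξ + ζ|) * exp (a * b * ξ ^ 2 / (b - a) + -(b - a) * (ζ - m) ^ 2) := by
        rw [exp_add, show ζ - m + (ξ + m) = ξ + ζ by ring]; ring
    _ = exp (a * (ξ + ζ) ^ 2) * (C + |ξ + ζ|) * exp (-b * ζ ^ 2) := by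
        rw [← hsquare, exp_add]; ring

lemma integrable_intervalIntegral_mul_exp_neg_mul_sq {b : ℝ} (hp : 1 ≤ p) (hβ : 0 ≤ β)
    (hf : 0 ≤ f) (hfw : Integrable fun x ↦ f x ^ p * exp (-β * x ^ 2)) (hb : β / p < b)
    (ξ : ℝ) : Integrable fun ζ : ℝ ↦ (∫ x in (0 : ℝ)..(ξ + ζ), f x) * exp (-b * ζ ^ 2) := by
  have hprim : Continuous fun y ↦ ∫ x in (0 : ℝ)..y, f x := intervalIntegral.continuous_primitive
    (intervalIntegrable_of_rpow_mul_exp_neg_mul_sq hp hβ hf hfw) 0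
  refine (integrable_exp_mul_add_sq_mul_exp_neg_mul_sq hb
    (∫ x, f x ^ p * exp (-β * x ^ 2)) ξ).mono'
    (by fun_prop : Continuous _).aestronglyMeasurable (.of_forall fun ζ ↦ ?_)
  rw [norm_mul, norm_eq_abs, norm_of_nonneg (exp_pos _).le]
  gcongr
  exact abs_intervalIntegral_le_of_rpow_mul_exp_neg_mul_sq hp hβ hf hfw (ξ + ζ)

end GaussianWeight

lemma gaussDensity_eq_mul_exp_neg_mul_sq (u ζ : ℝ) :
    gaussDensity u ζ = (√(2 * π * u))⁻¹ * exp (-(2 * u)⁻¹ * ζ ^ 2) := by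
  rw [gaussDensity, neg_div, div_eq_inv_mul, neg_mul]

lemma integrable_gaussianReal_zero_iff {v : NNReal} (hv : v ≠ 0) {g : ℝ → ℝ} :
    Integrable g (gaussianReal 0 v) ↔
      Integrable fun x ↦ g x * exp (-(2 * (v : ℝ))⁻¹ * x ^ 2) := by
  have hc : IsUnit (√(2 * π * v))⁻¹ := by
    have : 0 < v := pos_iff_ne_zero.mpr hv
    exact IsUnit.mk0 _ (by positivity)
  rw [gaussianReal_of_var_ne_zero 0 hv,
    integrable_withDensity_iff_integrable_smul' (measurable_gaussianPDF 0 v)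
      (.of_forall fun x ↦ gaussianPDF_lt_top)]
  refine (integrable_congr (.of_forall fun x ↦ ?_)).trans (integrable_const_mul_iff hc _)
  simp only [toReal_gaussianPDF, gaussianPDFReal, sub_zero, smul_eq_mul]
  rw [neg_div, div_eq_inv_mul, neg_mul]
  ring

theorem stmt0_general {p : ℝ} (hp : 1 ≤ p) {v : NNReal} {h : ℝ → ℝ}
    (hLp : Integrable (fun x ↦ |h x| ^ p) (gaussianReal 0 v))
    (ξ : ℝ) {u : ℝ} (hu : u ∈ Ioo 0 (p * v)) :
    Integrable fun ζ : ℝ ↦ (∫ x in (0 : ℝ)..(ξ + ζ), |h x|) * gaussDensity u ζ := by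
  obtain ⟨hu0, hupv⟩ := hu
  have hp0 : 0 < p := by positivity
  have hv0 : (0 : ℝ) < v := pos_of_mul_pos_right (hu0.trans hupv) hp0.le
  have hrate : (2 * (v : ℝ))⁻¹ / p < (2 * u)⁻¹ := by
    rw [div_eq_mul_inv, ← mul_inv]
    exact inv_strictAnti₀ (by positivity) (by linarith)
  have hfw := (integrable_gaussianReal_zero_iff (by exact_mod_cast hv0.ne')).mp hLp
  refine ((integrable_intervalIntegral_mul_exp_neg_mul_sq hp (by positivity)
    (fun x ↦ abs_nonneg (h x)) hfw hrate ξ).const_mul (√(2 * π * u))⁻¹).congr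
    (.of_forall fun ζ ↦ ?_)
  simp only [gaussDensity_eq_mul_exp_neg_mul_sq]
  ring

/-- for a nondecreasing `h` that is square-integrable with respect to the
standard Gaussian measure, for every `ξ` and `u ∈ (0,1]`, the function
`ζ ↦ (∫_0^{ξ+ζ} |h(x)| dx) · p(u,ζ)` is (Lebesgue-)integrable on `ℝ`. -/
theorem stmt0 (h : ℝ → ℝ) (hmono : Monotone h)
    (hL2 : Integrable (fun x => (h x) ^ 2) (gaussianReal 0 1))
    (ξ : ℝ) (u : ℝ) (hu : u ∈ Set.Ioc (0 : ℝ) 1) :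
    Integrable (fun ζ : ℝ => (∫ x in (0:ℝ)..(ξ + ζ), |h x|) * gaussDensity u ζ) :=
  stmt0_general one_le_two (by simpa only [rpow_two, sq_abs] using hL2) ξ
    ⟨hu.1, hu.2.trans_lt (by norm_num)⟩
end

section
/- Let h : ℝ → ℝ be nondecreasing and square-integrable with respect to N(0,1), and define R(u,ξ) = ∫_ℝ ( ∫_0^{ξ+ζ} h(x) dx ) p(u,ζ) dζ for u ∈ (0,1] and R(0,ξ) = ∫_0^ξ h(x) dx. Then R is continuous on [0,1] × ℝ, is of class C^{1,2} on (0,1] × ℝ, and on (0,1) × ℝ it solves the heat equation ∂_u R(u,ξ) = (1/2) ∂²_{ξξ} R(u,ξ), with initial condition R(0,ξ) = ∫_0^ξ h(x) dx. -/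
open MeasureTheory ProbabilityTheory

/-- The function `R(u,ξ) = ∫ (∫_0^{ξ+ζ} h) p(u,ζ) dζ` for `u > 0`,
with `R(0,ξ) = ∫_0^ξ h`. -/
noncomputable def heatR (h : ℝ → ℝ) (u ξ : ℝ) : ℝ :=
  if u = 0 then ∫ x in (0:ℝ)..ξ, h x
  else ∫ ζ : ℝ, (∫ x in (0:ℝ)..(ξ + ζ), h x) * gaussDensity u ζ

/-! With `H(x) = ∫_0^x h`, weighted AM-GM applied to `|h(t)|` and `exp (t² / (4v))` shows that the
primitive of a function in `L²(N(0,v))` is `O(exp (a x²))` for every `a > 1 / (4v)`. For `u > 0`,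
`R(u,·)` is the convolution of `H` with `p(u,·)`, and `p`, `∂_x p`, `∂²_{xx} p` are
`O(exp (-b x²))` for every `b < 1 / (2u)`. As long as `u < 2v` one can take `a < b`, so the
integrals converge locally uniformly, all derivatives fall on the kernel, and `R` inherits the heat
equation from `p`. The kernel degenerates at `u = 0`; there `R(u,ξ) = E[H(ξ + √u Z)]`, with `Z`
standard normal, is continuous by dominated convergence. -/

open Set Filter Topology Asymptotics Function
open scoped NNReal Convolution

lemma isBigO_top_id_exp_mul_sq {ε : ℝ} (hε : 0 < ε) :
    (fun x : ℝ => x) =O[⊤] fun x => Real.exp (ε * x ^ 2) := by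
  refine IsBigO.of_bound (1 + 1 / ε) (Eventually.of_forall fun x => ?_)
  rw [Real.norm_eq_abs, Real.norm_of_nonneg (Real.exp_pos _).le]
  calc |x| ≤ 1 + x ^ 2 := by nlinarith [sq_nonneg (|x| - 1), sq_abs x]
    _ ≤ (1 + 1 / ε) * (ε * x ^ 2 + 1) := by
        have : (1 + 1 / ε) * (ε * x ^ 2 + 1) = 1 + x ^ 2 + (ε * x ^ 2 + 1 / ε) := by
          field_simp
          ring
        rw [this]
        exact le_add_of_nonneg_right (by positivity)
    _ ≤ (1 + 1 / ε) * Real.exp (ε * x ^ 2) := by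
        gcongr
        exact Real.add_one_le_exp _

lemma mul_sq_sub_mul_sub_sq_le {a b : ℝ} (hab : a < b) (x y : ℝ) :
    a * y ^ 2 + -b * (x - y) ^ 2 ≤
      -((b - a) / 2) * y ^ 2 + (b ^ 2 / ((b - a) / 2) - b) * x ^ 2 := by
  obtain ⟨c, hc, rfl⟩ : ∃ c > 0, a = b - 2 * c := ⟨(b - a) / 2, by linarith, by ring⟩
  have hhalf : (b - (b - 2 * c)) / 2 = c := by ring
  have hsquare : -c * y ^ 2 + (b ^ 2 / c - b) * x ^ 2 - ((b - 2 * c) * y ^ 2 + -b * (x - y) ^ 2)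
      = c * (y - b / c * x) ^ 2 := by
    field_simp
    ring
  have : 0 ≤ c * (y - b / c * x) ^ 2 := by positivity
  rw [hhalf]
  linarith

/-- A family of kernels `K u`, indexed by a time `u > 0`, with the joint continuity and the decay of
the Gaussian density of variance `u`: locally uniformly in `u`, the kernel `K u` is dominated by
`exp (-b x²)` for every `b < 1 / (2u)`. Such a family can be convolved with any function of growth
`exp (a x²)` as long as `2au < 1`. -/
structure IsGaussianKernel (K : ℝ → ℝ → ℝ) : Prop where
  continuousOn : ContinuousOn (uncurry K) (Ioi 0 ×ˢ univ)
  isBigO_exp : ∀ {u b : ℝ}, 0 < u → 2 * b * u < 1 →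
    uncurry K =O[𝓝 u ×ˢ ⊤] fun q => Real.exp (-b * q.2 ^ 2)

namespace IsGaussianKernel

variable {K K' : ℝ → ℝ → ℝ} {H : ℝ → ℝ} {a u : ℝ}

lemma add (hK : IsGaussianKernel K) (hK' : IsGaussianKernel K') :
    IsGaussianKernel fun u x => K u x + K' u x where
  continuousOn := hK.continuousOn.add hK'.continuousOn
  isBigO_exp hu hb := (hK.isBigO_exp hu hb).add (hK'.isBigO_exp hu hb)

lemma time_mul (hK : IsGaussianKernel K) {c : ℝ → ℝ} (hc : ContinuousOn c (Ioi 0)) :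
    IsGaussianKernel fun u x => c u * K u x where
  continuousOn := (hc.comp continuousOn_fst fun _ hq => hq.1).mul hK.continuousOn
  isBigO_exp {u b} hu hb := by
    have hc_one : (fun q : ℝ × ℝ => c q.1) =O[𝓝 u ×ˢ ⊤] fun _ => (1 : ℝ) :=
      ((hc.continuousAt (Ioi_mem_nhds hu)).tendsto.comp tendsto_fst).isBigO_one ℝ
    simpa only [one_mul] using! hc_one.mul (hK.isBigO_exp hu hb)

lemma space_mul (hK : IsGaussianKernel K) : IsGaussianKernel fun u x => x * K u x where
  continuousOn := continuousOn_snd.mul hK.continuousOn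
  isBigO_exp {u b} hu hb := by
    obtain ⟨b', hbb', hb'⟩ : ∃ b', b < b' ∧ b' < 1 / (2 * u) :=
      exists_between (by rw [lt_div_iff₀ (by positivity)]; linarith)
    have hx : (fun q : ℝ × ℝ => q.2) =O[𝓝 u ×ˢ ⊤] fun q => Real.exp ((b' - b) * q.2 ^ 2) :=
      (isBigO_top_id_exp_mul_sq (sub_pos.2 hbb')).comp_tendsto tendsto_snd
    have hKb' := hK.isBigO_exp hu (b := b') (by rw [lt_div_iff₀ (by positivity)] at hb'; linarith)
    refine (hx.mul hKb').congr_right fun q => ?_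
    rw [← Real.exp_add]
    ring_nf

lemma continuous (hK : IsGaussianKernel K) (hu : 0 < u) : Continuous (K u) :=
  hK.continuousOn.comp_continuous (by fun_prop : Continuous fun x : ℝ => (u, x))
    fun _ => ⟨hu, mem_univ _⟩

lemma aestronglyMeasurable_smul (hK : IsGaussianKernel K) (hH : AEStronglyMeasurable H)
    (hu : 0 < u) (ξ : ℝ) : AEStronglyMeasurable fun y => H y • K u (ξ - y) :=
  hH.smul ((hK.continuous hu).comp (by fun_prop)).aestronglyMeasurable

lemma exists_integrable_bound (hK : IsGaussianKernel K)
    (hH : H =O[⊤] fun y => Real.exp (a * y ^ 2)) (hu : 0 < u) (hau : 2 * a * u < 1) (ξ : ℝ) :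
    ∃ g : ℝ → ℝ, Integrable g ∧ ∀ᶠ q in 𝓝 (u, ξ), ∀ y, ‖H y • K q.1 (q.2 - y)‖ ≤ g y := by
  obtain ⟨b, hab, hb⟩ : ∃ b, a < b ∧ b < 1 / (2 * u) :=
    exists_between (by rw [lt_div_iff₀ (by positivity)]; linarith)
  rw [lt_div_iff₀ (by positivity)] at hb
  obtain ⟨A, hA⟩ := isBigO_top.1 hH
  obtain ⟨B, hB0, hB⟩ := (hK.isBigO_exp hu (b := b) (by linarith)).exists_nonneg
  set c := (b - a) / 2
  have hc : 0 < c := half_pos (sub_pos.2 hab)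
  set M := b ^ 2 / c - b
  have hA0 : 0 ≤ A := by simpa using (norm_nonneg _).trans (hA 0)
  refine ⟨fun y => A * B * (Real.exp (M * ξ ^ 2) + 1) * Real.exp (-c * y ^ 2),
    (integrable_exp_neg_mul_sq hc).const_mul _, ?_⟩
  have hK_bound : ∀ᶠ w in 𝓝 u, ∀ x, ‖K w x‖ ≤ B * Real.exp (-b * x ^ 2) := by
    simpa [← principal_univ, eventually_prod_principal_iff, uncurry] using hB.bound
  have hM_bound : ∀ᶠ x in 𝓝 ξ, Real.exp (M * x ^ 2) < Real.exp (M * ξ ^ 2) + 1 :=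
    (by fun_prop : Continuous fun x : ℝ => Real.exp (M * x ^ 2)).continuousAt.eventually_lt_const
      (lt_add_one _)
  filter_upwards [hK_bound.prod_nhds hM_bound] with q ⟨hKq, hMq⟩ y
  calc ‖H y • K q.1 (q.2 - y)‖
      ≤ A * Real.exp (a * y ^ 2) * (B * Real.exp (-b * (q.2 - y) ^ 2)) := by
        rw [norm_smul]
        gcongr
        · simpa using hA y
        · exact hKq _
    _ = A * B * Real.exp (a * y ^ 2 + -b * (q.2 - y) ^ 2) := by rw [Real.exp_add]; ring
    _ ≤ A * B * Real.exp (-c * y ^ 2 + M * q.2 ^ 2) :=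
        mul_le_mul_of_nonneg_left (Real.exp_le_exp.2 (mul_sq_sub_mul_sub_sq_le hab _ _))
          (by positivity)
    _ = A * B * Real.exp (M * q.2 ^ 2) * Real.exp (-c * y ^ 2) := by rw [Real.exp_add]; ring
    _ ≤ A * B * (Real.exp (M * ξ ^ 2) + 1) * Real.exp (-c * y ^ 2) := by gcongr

lemma integrable_smul (hK : IsGaussianKernel K) (hH : AEStronglyMeasurable H)
    (hHa : H =O[⊤] fun y => Real.exp (a * y ^ 2)) (hu : 0 < u) (hau : 2 * a * u < 1) (ξ : ℝ) :
    Integrable fun y => H y • K u (ξ - y) := by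
  obtain ⟨g, hg, hbound⟩ := hK.exists_integrable_bound hHa hu hau ξ
  exact hg.mono' (hK.aestronglyMeasurable_smul hH hu ξ) (ae_of_all _ hbound.self_of_nhds)

lemma continuousAt_convolution (hK : IsGaussianKernel K) (hH : AEStronglyMeasurable H)
    (hHa : H =O[⊤] fun y => Real.exp (a * y ^ 2)) (hu : 0 < u) (hau : 2 * a * u < 1) (ξ : ℝ) :
    ContinuousAt (fun q : ℝ × ℝ => (H ⋆ K q.1) q.2) (u, ξ) := by
  obtain ⟨g, hg, hbound⟩ := hK.exists_integrable_bound hHa hu hau ξ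
  refine continuousAt_of_dominated ?_ (hbound.mono fun q hq => ae_of_all _ hq) hg
    (ae_of_all _ fun y => ?_)
  · filter_upwards [continuousAt_fst.eventually_mem (Ioi_mem_nhds hu)] with q hq
    exact hK.aestronglyMeasurable_smul hH hq q.2
  · have hcont : ContinuousAt (uncurry K) (u, ξ - y) :=
      hK.continuousOn.continuousAt (prod_mem_nhds (Ioi_mem_nhds hu) univ_mem)
    exact continuousAt_const.smul
      (hcont.comp (f := fun q : ℝ × ℝ => (q.1, q.2 - y)) (x := (u, ξ)) (by fun_prop))

lemma hasDerivAt_convolution_space (hK : IsGaussianKernel K) (hK' : IsGaussianKernel K')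
    (hKK' : ∀ x, HasDerivAt (K u) (K' u x) x) (hH : AEStronglyMeasurable H)
    (hHa : H =O[⊤] fun y => Real.exp (a * y ^ 2)) (hu : 0 < u) (hau : 2 * a * u < 1) (ξ : ℝ) :
    HasDerivAt (H ⋆ K u) ((H ⋆ K' u) ξ) ξ := by
  obtain ⟨g, hg, hbound⟩ := hK'.exists_integrable_bound hHa hu hau ξ
  have hs : {x | ∀ y, ‖H y • K' u (x - y)‖ ≤ g y} ∈ 𝓝 ξ :=
    (by fun_prop : ContinuousAt (fun x : ℝ => (u, x)) ξ).eventually hbound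
  exact (hasDerivAt_integral_of_dominated_loc_of_deriv_le
    (F := fun x y => H y • K u (x - y)) (F' := fun x y => H y • K' u (x - y)) hs
    (Eventually.of_forall fun x => hK.aestronglyMeasurable_smul hH hu x)
    (hK.integrable_smul hH hHa hu hau ξ) (hK'.aestronglyMeasurable_smul hH hu ξ)
    (ae_of_all _ fun y _ hx => hx y) hg
    (ae_of_all _ fun y x _ => ((hKK' (x - y)).comp_sub_const x y).const_smul (H y))).2

lemma hasDerivAt_convolution_time (hK : IsGaussianKernel K) (hK' : IsGaussianKernel K')
    (hKK' : ∀ w > 0, ∀ x, HasDerivAt (fun v => K v x) (K' w x) w) (hH : AEStronglyMeasurable H)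
    (hHa : H =O[⊤] fun y => Real.exp (a * y ^ 2)) (hu : 0 < u) (hau : 2 * a * u < 1) (ξ : ℝ) :
    HasDerivAt (fun v => (H ⋆ K v) ξ) ((H ⋆ K' u) ξ) u := by
  obtain ⟨g, hg, hbound⟩ := hK'.exists_integrable_bound hHa hu hau ξ
  have hs : {w | ∀ y, ‖H y • K' w (ξ - y)‖ ≤ g y} ∩ Ioi 0 ∈ 𝓝 u :=
    inter_mem ((by fun_prop : ContinuousAt (fun w : ℝ => (w, ξ)) u).eventually hbound)
      (Ioi_mem_nhds hu)
  exact (hasDerivAt_integral_of_dominated_loc_of_deriv_le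
    (F := fun w y => H y • K w (ξ - y)) (F' := fun w y => H y • K' w (ξ - y)) hs
    (mem_of_superset (Ioi_mem_nhds hu) fun w hw => hK.aestronglyMeasurable_smul hH hw ξ)
    (hK.integrable_smul hH hHa hu hau ξ) (hK'.aestronglyMeasurable_smul hH hu ξ)
    (ae_of_all _ fun y _ hw => hw.1 y) hg
    (ae_of_all _ fun y w hw => (hKK' w hw.2 (ξ - y)).const_smul (H y))).2

end IsGaussianKernel

/-- The first space derivative `∂_x p(u, x)` of the Gaussian density. -/
noncomputable def gaussDensityDx (u x : ℝ) : ℝ :=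
  -(x / u) * gaussDensity u x

/-- The second space derivative `∂²_{xx} p(u, x)` of the Gaussian density. -/
noncomputable def gaussDensityDxx (u x : ℝ) : ℝ :=
  (x ^ 2 / u ^ 2 - 1 / u) * gaussDensity u x

lemma hasDerivAt_gaussDensity_space (u x : ℝ) :
    HasDerivAt (gaussDensity u) (gaussDensityDx u x) x := by
  have hexponent : HasDerivAt (fun x : ℝ => -x ^ 2 / (2 * u)) (-(x / u)) x :=
    ((hasDerivAt_pow 2 x).neg.div_const (2 * u)).congr_deriv (by push_cast; ring)
  exact (hexponent.exp.const_mul _).congr_deriv (by rw [gaussDensityDx, gaussDensity]; ring)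

lemma hasDerivAt_gaussDensityDx_space (u x : ℝ) :
    HasDerivAt (gaussDensityDx u) (gaussDensityDxx u x) x := by
  have hfactor : HasDerivAt (fun x : ℝ => -(x / u)) (-(1 / u)) x :=
    ((hasDerivAt_id x).div_const u).neg
  exact (hfactor.mul (hasDerivAt_gaussDensity_space u x)).congr_deriv
    (by rw [gaussDensityDx, gaussDensityDxx]; ring)

lemma hasDerivAt_gaussDensity_time {u : ℝ} (hu : 0 < u) (x : ℝ) :
    HasDerivAt (fun w => gaussDensity w x) (1 / 2 * gaussDensityDxx u x) u := by
  have hsqrt_sq : √(2 * Real.pi * u) ^ 2 = 2 * Real.pi * u := Real.sq_sqrt (by positivity)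
  have hnormalization : HasDerivAt (fun w : ℝ => (√(2 * Real.pi * w))⁻¹)
      (-(1 / (2 * u)) * (√(2 * Real.pi * u))⁻¹) u := by
    have hsqrt := ((hasDerivAt_id u).const_mul (2 * Real.pi)).sqrt (by positivity)
    refine (hsqrt.inv (by positivity)).congr_deriv ?_
    simp only [id, hsqrt_sq]
    field_simp
  have hexponent : HasDerivAt (fun w : ℝ => -x ^ 2 / (2 * w)) (x ^ 2 / (2 * u ^ 2)) u := by
    refine ((hasDerivAt_const u (-x ^ 2)).div ((hasDerivAt_id u).const_mul 2)
      (by simpa using hu.ne')).congr_deriv ?_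
    simp only [id]
    field_simp
    ring
  refine (hnormalization.mul hexponent.exp).congr_deriv ?_
  rw [gaussDensityDxx, gaussDensity]
  ring

lemma isGaussianKernel_gaussDensity : IsGaussianKernel gaussDensity where
  continuousOn q hq := by
    have hq0 : (0 : ℝ) < q.1 := hq.1
    have hsqrt : √(2 * Real.pi * q.1) ≠ 0 := by positivity
    have hdenom : 2 * q.1 ≠ 0 := by positivity
    unfold gaussDensity uncurry
    exact ContinuousAt.continuousWithinAt (by fun_prop (disch := assumption))
  isBigO_exp {u b} hu hb := by
    have hnormalization : (fun q : ℝ × ℝ => (√(2 * Real.pi * q.1))⁻¹) =O[𝓝 u ×ˢ ⊤]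
        fun _ => (1 : ℝ) := by
      have hsqrt : √(2 * Real.pi * u) ≠ 0 := by positivity
      have hcont : ContinuousAt (fun w : ℝ => (√(2 * Real.pi * w))⁻¹) u := by
        fun_prop (disch := assumption)
      exact (hcont.tendsto.comp tendsto_fst).isBigO_one ℝ
    have hnear : ∀ᶠ w in 𝓝 u, 0 < w ∧ 2 * b * w < 1 :=
      (eventually_gt_nhds hu).and
        ((by fun_prop : Continuous fun w : ℝ => 2 * b * w).continuousAt.eventually_lt_const hb)
    have hexp : (fun q : ℝ × ℝ => Real.exp (-q.2 ^ 2 / (2 * q.1))) =O[𝓝 u ×ˢ ⊤]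
        fun q => Real.exp (-b * q.2 ^ 2) := by
      refine IsBigO.of_bound' ?_
      filter_upwards [tendsto_fst.eventually hnear] with q ⟨hq0, hqb⟩
      rw [Real.norm_of_nonneg (Real.exp_pos _).le, Real.norm_of_nonneg (Real.exp_pos _).le,
        Real.exp_le_exp, div_le_iff₀ (by positivity)]
      nlinarith [sq_nonneg q.2]
    simpa only [one_mul] using! hnormalization.mul hexp

lemma isGaussianKernel_gaussDensityDx : IsGaussianKernel gaussDensityDx := by
  have hinv : ContinuousOn (fun u : ℝ => -u⁻¹) (Ioi 0) :=
    (continuousOn_inv₀.mono fun _ hu => ne_of_gt hu).neg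
  convert isGaussianKernel_gaussDensity.space_mul.time_mul hinv using 3 with u x
  rw [gaussDensityDx]
  ring

lemma isGaussianKernel_gaussDensityDxx : IsGaussianKernel gaussDensityDxx := by
  have hinv : ContinuousOn (fun u : ℝ => -u⁻¹) (Ioi 0) :=
    (continuousOn_inv₀.mono fun _ hu => ne_of_gt hu).neg
  convert (isGaussianKernel_gaussDensity.add isGaussianKernel_gaussDensityDx.space_mul).time_mul
    hinv using 3 with u x
  rw [gaussDensityDx, gaussDensityDxx]
  ring

lemma hasDerivAt_convolution_gaussDensity_time {H : ℝ → ℝ} {a u : ℝ} (hH : AEStronglyMeasurable H)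
    (hHa : H =O[⊤] fun y => Real.exp (a * y ^ 2)) (hu : 0 < u) (hau : 2 * a * u < 1) (ξ : ℝ) :
    HasDerivAt (fun w => (H ⋆ gaussDensity w) ξ) (1 / 2 * (H ⋆ gaussDensityDxx u) ξ) u := by
  have hhalf := isGaussianKernel_gaussDensityDxx.time_mul (c := fun _ => 1 / 2) continuousOn_const
  refine (isGaussianKernel_gaussDensity.hasDerivAt_convolution_time hhalf
    (fun w hw x => hasDerivAt_gaussDensity_time hw x) hH hHa hu hau ξ).congr_deriv ?_
  simp only [convolution_lsmul, smul_eq_mul, ← integral_const_mul]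
  congr with y
  ring

lemma integrable_gaussianReal_iff {μ : ℝ} {v : ℝ≥0} (hv : v ≠ 0) {f : ℝ → ℝ} :
    Integrable f (gaussianReal μ v) ↔
      Integrable fun x => f x * Real.exp (-(x - μ) ^ 2 / (2 * v)) := by
  have hnormalization : IsUnit (√(2 * Real.pi * v))⁻¹ := isUnit_iff_ne_zero.2 (by positivity)
  rw [gaussianReal_of_var_ne_zero μ hv, integrable_withDensity_iff (measurable_gaussianPDF μ v)
    (ae_of_all _ fun _ => gaussianPDF_lt_top), ← integrable_const_mul_iff hnormalization
    fun x => f x * Real.exp (-(x - μ) ^ 2 / (2 * v))]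
  simp only [toReal_gaussianPDF, gaussianPDFReal, mul_left_comm]

lemma mul_add_mul_sq_le {a s c : ℝ} (hs : 2 * |a| * s ^ 2 ≤ c) (x z : ℝ) :
    a * (x + s * z) ^ 2 ≤ 2 * |a| * x ^ 2 + c * z ^ 2 :=
  calc a * (x + s * z) ^ 2 ≤ |a| * (2 * x ^ 2 + 2 * (s * z) ^ 2) := by
        gcongr
        · exact le_abs_self a
        · nlinarith [sq_nonneg (x - s * z)]
    _ = 2 * |a| * x ^ 2 + 2 * |a| * s ^ 2 * z ^ 2 := by ring
    _ ≤ 2 * |a| * x ^ 2 + c * z ^ 2 := by gcongr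

lemma continuousAt_integral_comp_add_mul_gaussianReal {H : ℝ → ℝ} {a : ℝ} (hH : Continuous H)
    (hHa : H =O[⊤] fun y => Real.exp (a * y ^ 2)) (ξ : ℝ) :
    ContinuousAt (fun q : ℝ × ℝ => ∫ z, H (q.2 + q.1 * z) ∂gaussianReal 0 1) (0, ξ) := by
  obtain ⟨A, hA⟩ := isBigO_top.1 hHa
  have hA0 : 0 ≤ A := by simpa using (norm_nonneg _).trans (hA 0)
  have hnear : ∀ᶠ q : ℝ × ℝ in 𝓝 (0, ξ), 2 * |a| * q.1 ^ 2 < 1 / 4 ∧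
      Real.exp (2 * |a| * q.2 ^ 2) < Real.exp (2 * |a| * ξ ^ 2) + 1 :=
    ((by fun_prop : Continuous fun q : ℝ × ℝ => 2 * |a| * q.1 ^ 2).continuousAt.eventually_lt_const
      (by norm_num)).and
    ((by fun_prop : Continuous fun q : ℝ × ℝ => Real.exp (2 * |a| * q.2 ^ 2)).continuousAt
      |>.eventually_lt_const (lt_add_one _))
  refine continuousAt_of_dominated
    (bound := fun z => A * (Real.exp (2 * |a| * ξ ^ 2) + 1) * Real.exp (1 / 4 * z ^ 2))
    (Eventually.of_forall fun q => (hH.comp (by fun_prop)).aestronglyMeasurable) ?_ ?_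
    (ae_of_all _ fun z => (hH.comp (by fun_prop)).continuousAt)
  · filter_upwards [hnear] with q ⟨hq1, hq2⟩
    refine ae_of_all _ fun z => ?_
    calc ‖H (q.2 + q.1 * z)‖ ≤ A * Real.exp (a * (q.2 + q.1 * z) ^ 2) := by simpa using hA _
      _ ≤ A * Real.exp (2 * |a| * q.2 ^ 2 + 1 / 4 * z ^ 2) := by
          gcongr
          exact mul_add_mul_sq_le hq1.le _ _
      _ = A * Real.exp (2 * |a| * q.2 ^ 2) * Real.exp (1 / 4 * z ^ 2) := by
          rw [Real.exp_add]
          ring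
      _ ≤ A * (Real.exp (2 * |a| * ξ ^ 2) + 1) * Real.exp (1 / 4 * z ^ 2) := by gcongr
  · refine ((integrable_gaussianReal_iff one_ne_zero).2 ?_).const_mul _
    refine (integrable_exp_neg_mul_sq (by norm_num : (0 : ℝ) < 1 / 4)).congr
      (ae_of_all _ fun z => ?_)
    simp only [← Real.exp_add, NNReal.coe_one]
    ring_nf

lemma abs_le_exp_mul_sq_mul_exp_add_one (v : ℝ≥0) {x t : ℝ} (htx : |t| ≤ |x|) (y : ℝ) :
    |y| ≤ 1 / 2 * Real.exp (x ^ 2 / (4 * v)) * (y ^ 2 * Real.exp (-t ^ 2 / (2 * v)) + 1) := by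
  set e := Real.exp (t ^ 2 / (4 * v)) with he
  have he0 : 0 < e := Real.exp_pos _
  have hweight : Real.exp (-t ^ 2 / (2 * v)) = (e ^ 2)⁻¹ := by
    rw [he, ← Real.exp_nat_mul, ← Real.exp_neg]
    congr 1
    push_cast
    ring
  calc |y| ≤ 1 / 2 * e * (y ^ 2 * (e ^ 2)⁻¹ + 1) := by
        have hsquare : 1 / 2 * e * (y ^ 2 * (e ^ 2)⁻¹ + 1) - |y| = (|y| - e) ^ 2 / (2 * e) := by
          rw [← sq_abs y]
          field_simp
          ring
        have : 0 ≤ (|y| - e) ^ 2 / (2 * e) := by positivity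
        linarith
    _ ≤ 1 / 2 * Real.exp (x ^ 2 / (4 * v)) * (y ^ 2 * Real.exp (-t ^ 2 / (2 * v)) + 1) := by
        have := sq_le_sq.2 htx
        rw [hweight, he]
        gcongr

lemma abs_le_abs_of_mem_uIoc_zero_s1 {x t : ℝ} (ht : t ∈ uIoc 0 x) : |t| ≤ |x| := by
  simpa using abs_sub_left_of_mem_uIcc (uIoc_subset_uIcc ht)

section GaussianSquareIntegrable

variable {h : ℝ → ℝ} {v : ℝ≥0}

lemma integrable_sq_mul_exp_of_memLp_gaussianReal (hv : v ≠ 0) (hh : MemLp h 2 (gaussianReal 0 v)) :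
    Integrable fun t => h t ^ 2 * Real.exp (-t ^ 2 / (2 * v)) := by
  simpa only [sub_zero] using (integrable_gaussianReal_iff hv).1 hh.integrable_sq

lemma integrableOn_uIoc_exp_mul_sq_mul_exp_add_one (hv : v ≠ 0)
    (hh : MemLp h 2 (gaussianReal 0 v)) (C x : ℝ) :
    IntegrableOn (fun t => C * (h t ^ 2 * Real.exp (-t ^ 2 / (2 * v)) + 1)) (uIoc 0 x) :=
  ((integrable_sq_mul_exp_of_memLp_gaussianReal hv hh).integrableOn.add
    (integrableOn_const (by simp))).const_mul C

lemma intervalIntegrable_of_memLp_gaussianReal (hv : v ≠ 0) (hh : MemLp h 2 (gaussianReal 0 v))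
    (x y : ℝ) : IntervalIntegrable h volume x y := by
  have hmeas : AEStronglyMeasurable h := hh.1.mono_ac (gaussianReal_absolutelyContinuous' 0 hv)
  have hzero (x : ℝ) : IntervalIntegrable h volume 0 x := by
    rw [intervalIntegrable_iff]
    refine (integrableOn_uIoc_exp_mul_sq_mul_exp_add_one hv hh
      (1 / 2 * Real.exp (x ^ 2 / (4 * v))) x).mono' hmeas.restrict
      ((ae_restrict_iff' measurableSet_uIoc).2 (ae_of_all _ fun t ht => ?_))
    exact abs_le_exp_mul_sq_mul_exp_add_one v (abs_le_abs_of_mem_uIoc_zero_s1 ht) (h t)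
  exact (hzero x).symm.trans (hzero y)

lemma abs_intervalIntegral_le_of_memLp_gaussianReal (hv : v ≠ 0)
    (hh : MemLp h 2 (gaussianReal 0 v)) (x : ℝ) :
    |∫ t in (0 : ℝ)..x, h t| ≤ 1 / 2 * Real.exp (x ^ 2 / (4 * v)) *
      ((∫ t, h t ^ 2 * Real.exp (-t ^ 2 / (2 * v))) + |x|) := by
  have hint := integrable_sq_mul_exp_of_memLp_gaussianReal hv hh
  calc |∫ t in (0 : ℝ)..x, h t|
      ≤ ∫ t in uIoc 0 x, |h t| := by
        simpa only [Real.norm_eq_abs] using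
          intervalIntegral.norm_integral_le_integral_norm_uIoc (f := h) (μ := volume)
    _ ≤ ∫ t in uIoc 0 x, 1 / 2 * Real.exp (x ^ 2 / (4 * v)) *
          (h t ^ 2 * Real.exp (-t ^ 2 / (2 * v)) + 1) :=
        setIntegral_mono_on (intervalIntegrable_of_memLp_gaussianReal hv hh 0 x).def'.abs
          (integrableOn_uIoc_exp_mul_sq_mul_exp_add_one hv hh _ x) measurableSet_uIoc fun t ht =>
            abs_le_exp_mul_sq_mul_exp_add_one v (abs_le_abs_of_mem_uIoc_zero_s1 ht) (h t)
    _ = 1 / 2 * Real.exp (x ^ 2 / (4 * v)) *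
          ((∫ t in uIoc 0 x, h t ^ 2 * Real.exp (-t ^ 2 / (2 * v))) + |x|) := by
        rw [integral_const_mul, integral_add hint.integrableOn (integrableOn_const (by simp))]
        simp [measureReal_def, Real.volume_uIoc]
    _ ≤ 1 / 2 * Real.exp (x ^ 2 / (4 * v)) *
          ((∫ t, h t ^ 2 * Real.exp (-t ^ 2 / (2 * v))) + |x|) := by
        gcongr ?_ * (?_ + _)
        exact setIntegral_le_integral hint (ae_of_all _ fun t => by positivity)

lemma isBigO_top_intervalIntegral_of_memLp_gaussianReal (hv : v ≠ 0)
    (hh : MemLp h 2 (gaussianReal 0 v)) {a : ℝ} (ha : 1 / (4 * v) < a) :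
    (fun x => ∫ t in (0 : ℝ)..x, h t) =O[⊤] fun x => Real.exp (a * x ^ 2) := by
  set I := ∫ t, h t ^ 2 * Real.exp (-t ^ 2 / (2 * v))
  have hε : 0 < a - 1 / (4 * v) := sub_pos.2 ha
  have hone : (fun _ : ℝ => I) =O[⊤] fun x => Real.exp ((a - 1 / (4 * v)) * x ^ 2) :=
    (isBigO_const_one ℝ I ⊤).trans <| IsBigO.of_bound' <| Eventually.of_forall fun x => by
      simpa using mul_nonneg hε.le (sq_nonneg x)
  have hfactor : (fun x => I + |x|) =O[⊤] fun x => Real.exp ((a - 1 / (4 * v)) * x ^ 2) :=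
    hone.add (isBigO_top_id_exp_mul_sq hε).abs_left
  have hweight : (fun x : ℝ => 1 / 2 * Real.exp (x ^ 2 / (4 * v))) =O[⊤]
      fun x => Real.exp (x ^ 2 / (4 * v)) := isBigO_const_mul_self _ _ _
  refine ((IsBigO.of_bound' (Eventually.of_forall fun x => ?_)).trans
    (hweight.mul hfactor)).congr_right fun x => ?_
  · exact (abs_intervalIntegral_le_of_memLp_gaussianReal hv hh x).trans (le_abs_self _)
  · rw [← Real.exp_add]
    ring_nf

end GaussianSquareIntegrable

lemma heatR_eq_convolution (h : ℝ → ℝ) {u : ℝ} (hu : u ≠ 0) (ξ : ℝ) :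
    heatR h u ξ = ((fun y => ∫ t in (0 : ℝ)..y, h t) ⋆ gaussDensity u) ξ := by
  rw [heatR, if_neg hu, ← integral_sub_right_eq_self _ ξ, convolution_lsmul]
  simp only [add_sub_cancel, smul_eq_mul, gaussDensity, sub_sq_comm]

lemma heatR_eq_integral_gaussianReal (h : ℝ → ℝ) (u : ℝ≥0) (ξ : ℝ) :
    heatR h u ξ = ∫ ζ, (∫ t in (0 : ℝ)..(ξ + ζ), h t) ∂gaussianReal 0 u := by
  rcases eq_or_ne u 0 with rfl | hu
  · simp [heatR]
  · rw [heatR, if_neg (by exact_mod_cast hu), integral_gaussianReal_eq_integral_smul hu]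
    simp only [gaussianPDFReal, gaussDensity, sub_zero, smul_eq_mul, mul_comm]

section HeatR

variable {h : ℝ → ℝ} {a u : ℝ}

lemma heatR_eq_integral_add_sqrt_mul (hprim : Continuous fun x => ∫ t in (0 : ℝ)..x, h t)
    (hu : 0 ≤ u) (ξ : ℝ) :
    heatR h u ξ = ∫ z, (∫ t in (0 : ℝ)..(ξ + √u * z), h t) ∂gaussianReal 0 1 := by
  lift u to ℝ≥0 using hu
  have hmap : (gaussianReal 0 1).map (√(u : ℝ) * ·) = gaussianReal 0 u := by
    rw [gaussianReal_map_const_mul]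
    congr
    · simp
    · ext
      simp
  rw [heatR_eq_integral_gaussianReal, ← hmap, integral_map (by fun_prop)]
  exact (hprim.comp (by fun_prop)).aestronglyMeasurable

lemma continuousWithinAt_heatR (hprim : Continuous fun x => ∫ t in (0 : ℝ)..x, h t)
    (hgrowth : (fun x => ∫ t in (0 : ℝ)..x, h t) =O[⊤] fun x => Real.exp (a * x ^ 2))
    (hu : 0 ≤ u) (hau : 2 * a * u < 1) (ξ : ℝ) :
    ContinuousWithinAt (fun q : ℝ × ℝ => heatR h q.1 q.2) (Ici 0 ×ˢ univ) (u, ξ) := by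
  rcases hu.eq_or_lt with rfl | hu
  · have hscaled : ContinuousAt (fun q : ℝ × ℝ =>
        ∫ z, (∫ t in (0 : ℝ)..(q.2 + √q.1 * z), h t) ∂gaussianReal 0 1) (0, ξ) :=
      (continuousAt_integral_comp_add_mul_gaussianReal hprim hgrowth ξ).comp_of_eq
        (f := fun q : ℝ × ℝ => (√q.1, q.2)) (by fun_prop) (by simp)
    exact hscaled.continuousWithinAt.congr
      (fun q hq => heatR_eq_integral_add_sqrt_mul hprim hq.1 q.2)
      (heatR_eq_integral_add_sqrt_mul hprim le_rfl ξ)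
  · refine ((isGaussianKernel_gaussDensity.continuousAt_convolution hprim.aestronglyMeasurable
      hgrowth hu hau ξ).congr ?_).continuousWithinAt
    filter_upwards [continuousAt_fst.eventually_mem (Ioi_mem_nhds hu)] with q hq
    exact (heatR_eq_convolution h (ne_of_gt hq) q.2).symm

lemma hasDerivAt_heatR_time (hprim : Continuous fun x => ∫ t in (0 : ℝ)..x, h t)
    (hgrowth : (fun x => ∫ t in (0 : ℝ)..x, h t) =O[⊤] fun x => Real.exp (a * x ^ 2))
    (hu : 0 < u) (hau : 2 * a * u < 1) (ξ : ℝ) :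
    HasDerivAt (fun w => heatR h w ξ)
      (1 / 2 * ((fun x => ∫ t in (0 : ℝ)..x, h t) ⋆ gaussDensityDxx u) ξ) u := by
  refine (hasDerivAt_convolution_gaussDensity_time hprim.aestronglyMeasurable hgrowth hu hau
    ξ).congr_of_eventuallyEq ?_
  filter_upwards [Ioi_mem_nhds hu] with w hw using heatR_eq_convolution h (ne_of_gt hw) ξ

lemma hasDerivAt_heatR_space (hprim : Continuous fun x => ∫ t in (0 : ℝ)..x, h t)
    (hgrowth : (fun x => ∫ t in (0 : ℝ)..x, h t) =O[⊤] fun x => Real.exp (a * x ^ 2))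
    (hu : 0 < u) (hau : 2 * a * u < 1) (ξ : ℝ) :
    HasDerivAt (fun x => heatR h u x)
      (((fun x => ∫ t in (0 : ℝ)..x, h t) ⋆ gaussDensityDx u) ξ) ξ := by
  simpa only [heatR_eq_convolution h hu.ne'] using
    isGaussianKernel_gaussDensity.hasDerivAt_convolution_space isGaussianKernel_gaussDensityDx
      (hasDerivAt_gaussDensity_space u) hprim.aestronglyMeasurable hgrowth hu hau ξ

end HeatR

lemma exists_growth_rate {v T : ℝ} (hT0 : 0 < T) (hTv : T < 2 * v) :
    ∃ a, 1 / (4 * v) < a ∧ ∀ u ≤ T, 2 * a * u < 1 := by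
  obtain ⟨a, hva, haT⟩ : ∃ a, 1 / (4 * v) < a ∧ a < 1 / (2 * T) :=
    exists_between (one_div_lt_one_div_of_lt (by positivity) (by linarith))
  have hv : 0 < v := by linarith
  have ha : 0 < a := lt_trans (by positivity) hva
  rw [lt_div_iff₀ (by positivity)] at haT
  exact ⟨a, hva, fun u hu => by nlinarith⟩

theorem stmt1_general {h : ℝ → ℝ} {v : ℝ≥0} (hL2 : MemLp h 2 (gaussianReal 0 v)) {T : ℝ}
    (hT0 : 0 < T) (hTv : T < 2 * v) :
    ContinuousOn (fun q : ℝ × ℝ => heatR h q.1 q.2) (Icc 0 T ×ˢ univ) ∧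
    (∃ Ru Rx Rxx : ℝ → ℝ → ℝ,
      (∀ u ∈ Ioc 0 T, ∀ ξ : ℝ,
        HasDerivAt (fun w => heatR h w ξ) (Ru u ξ) u ∧
        HasDerivAt (fun x => heatR h u x) (Rx u ξ) ξ ∧
        HasDerivAt (fun x => Rx u x) (Rxx u ξ) ξ) ∧
      ContinuousOn (fun q : ℝ × ℝ => Ru q.1 q.2) (Ioc 0 T ×ˢ univ) ∧
      ContinuousOn (fun q : ℝ × ℝ => Rx q.1 q.2) (Ioc 0 T ×ˢ univ) ∧
      ContinuousOn (fun q : ℝ × ℝ => Rxx q.1 q.2) (Ioc 0 T ×ˢ univ) ∧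
      (∀ u ∈ Ioo 0 T, ∀ ξ : ℝ, Ru u ξ = (1 / 2) * Rxx u ξ)) ∧
    (∀ ξ : ℝ, heatR h 0 ξ = ∫ x in (0 : ℝ)..ξ, h x) := by
  have hv : v ≠ 0 := by
    rintro rfl
    exact absurd hTv (by simpa using hT0.le)
  obtain ⟨a, hva, hau⟩ := exists_growth_rate hT0 hTv
  set H : ℝ → ℝ := fun x => ∫ t in (0 : ℝ)..x, h t
  have hprim : Continuous H :=
    intervalIntegral.continuous_primitive (intervalIntegrable_of_memLp_gaussianReal hv hL2) 0
  have hmeas : AEStronglyMeasurable H := hprim.aestronglyMeasurable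
  have hgrowth := isBigO_top_intervalIntegral_of_memLp_gaussianReal hv hL2 hva
  have hcont {K : ℝ → ℝ → ℝ} (hK : IsGaussianKernel K) :
      ContinuousOn (fun q : ℝ × ℝ => (H ⋆ K q.1) q.2) (Ioc 0 T ×ˢ univ) := fun q hq =>
    (hK.continuousAt_convolution hmeas hgrowth hq.1.1 (hau _ hq.1.2) q.2).continuousWithinAt
  have hDx := isGaussianKernel_gaussDensityDx
  have hDxx := isGaussianKernel_gaussDensityDxx
  refine ⟨fun q hq => (continuousWithinAt_heatR hprim hgrowth hq.1.1 (hau _ hq.1.2) q.2).mono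
      (prod_mono_left Icc_subset_Ici_self),
    ⟨fun u ξ => 1 / 2 * (H ⋆ gaussDensityDxx u) ξ, fun u => H ⋆ gaussDensityDx u,
      fun u => H ⋆ gaussDensityDxx u, fun u hu ξ => ⟨?_, ?_, ?_⟩, (hcont hDxx).const_mul _,
      hcont hDx, hcont hDxx, fun _ _ _ => rfl⟩, fun ξ => if_pos rfl⟩
  · exact hasDerivAt_heatR_time hprim hgrowth hu.1 (hau u hu.2) ξ
  · exact hasDerivAt_heatR_space hprim hgrowth hu.1 (hau u hu.2) ξ
  · exact hDx.hasDerivAt_convolution_space hDxx (hasDerivAt_gaussDensityDx_space u) hmeas hgrowth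
      hu.1 (hau u hu.2) ξ

/-- `R` is continuous on `[0,1] × ℝ`, of class `C^{1,2}` on `(0,1] × ℝ`
(in the sense that `∂_u R`, `∂_ξ R` and `∂²_{ξξ} R` exist there and are continuous),
solves the heat equation `∂_u R = ½ ∂²_{ξξ} R` on `(0,1) × ℝ`, and has initial
condition `R(0,ξ) = ∫_0^ξ h`. -/
theorem stmt1 (h : ℝ → ℝ) (hmono : Monotone h)
    (hL2 : Integrable (fun x => (h x) ^ 2) (gaussianReal 0 1)) :
    ContinuousOn (fun q : ℝ × ℝ => heatR h q.1 q.2) (Set.Icc 0 1 ×ˢ Set.univ) ∧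
    (∃ Ru Rx Rxx : ℝ → ℝ → ℝ,
      (∀ u ∈ Set.Ioc (0:ℝ) 1, ∀ ξ : ℝ,
        HasDerivAt (fun v => heatR h v ξ) (Ru u ξ) u ∧
        HasDerivAt (fun x => heatR h u x) (Rx u ξ) ξ ∧
        HasDerivAt (fun x => Rx u x) (Rxx u ξ) ξ) ∧
      ContinuousOn (fun q : ℝ × ℝ => Ru q.1 q.2) (Set.Ioc 0 1 ×ˢ Set.univ) ∧
      ContinuousOn (fun q : ℝ × ℝ => Rx q.1 q.2) (Set.Ioc 0 1 ×ˢ Set.univ) ∧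
      ContinuousOn (fun q : ℝ × ℝ => Rxx q.1 q.2) (Set.Ioc 0 1 ×ˢ Set.univ) ∧
      (∀ u ∈ Set.Ioo (0:ℝ) 1, ∀ ξ : ℝ, Ru u ξ = (1/2) * Rxx u ξ)) ∧
    (∀ ξ : ℝ, heatR h 0 ξ = ∫ x in (0:ℝ)..ξ, h x) :=
  stmt1_general ((memLp_two_iff_integrable_sq hmono.measurable.aestronglyMeasurable).2 hL2)
    one_pos (by norm_num)
end

section
/- Let h : ℝ → ℝ be nondecreasing and square-integrable with respect to N(0,1), and define the convex conjugate at time 0 by R^c(0,v) = sup_{ξ∈ℝ} ( ξ v − ∫_0^ξ h(x) dx ). Then for every x ∈ ℝ one has 0 ≤ R^c(0, h(x)) = | x h(x) − ∫_0^x h(r) dr | ≤ |x| ( |h(x)| + |h(0)| ), and consequently ∫_ℝ R^c(0, h(x)) dN(0,1)(x) < ∞. -/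
open MeasureTheory ProbabilityTheory

/-- The convex conjugate at time `0`: `R^c(0,v) = sup_ξ (ξ v − ∫_0^ξ h)`. -/
noncomputable def Rconj (h : ℝ → ℝ) (v : ℝ) : ℝ :=
  ⨆ ξ : ℝ, (ξ * v - ∫ x in (0:ℝ)..ξ, h x)

/-!
The primitive `ξ ↦ ∫ r in 0..ξ, h r` of a nondecreasing `h` is convex and has `h x` as a subgradient
at `x`, so the supremum defining `Rconj h (h x)` is attained at `ξ = x`. Comparing this maximum with
the value at `ξ = 0` gives nonnegativity, and the subgradient inequality at `0` gives
`Rconj h (h x) ≤ x * (h x - h 0)`. Under a finite measure for which `id` and `h` are in `L²`, this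
bound is integrable by Cauchy–Schwarz.
-/

theorem sub_mul_le_intervalIntegral_of_monotoneOn {h : ℝ → ℝ} {a b : ℝ}
    (hmono : MonotoneOn h (Set.uIcc a b)) : (b - a) * h a ≤ ∫ x in a..b, h x := by
  have hint : IntervalIntegrable h volume a b := hmono.intervalIntegrable
  rcases le_total a b with hab | hba
  · have hle : ∫ _ in a..b, h a ≤ ∫ x in a..b, h x :=
      intervalIntegral.integral_mono_on hab intervalIntegrable_const hint fun x hx =>
        hmono Set.left_mem_uIcc (Set.Icc_subset_uIcc hx) hx.1
    simpa using hle
  · have hle : ∫ x in b..a, h x ≤ ∫ _ in b..a, h a :=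
      intervalIntegral.integral_mono_on hba hint.symm intervalIntegrable_const fun x hx =>
        hmono (Set.Icc_subset_uIcc' hx) Set.left_mem_uIcc hx.2
    rw [intervalIntegral.integral_const, smul_eq_mul] at hle
    rw [intervalIntegral.integral_symm]
    linarith

section

variable {h : ℝ → ℝ}

theorem mul_sub_integral_le_mul_sub_integral (hmono : Monotone h) (x ξ : ℝ) :
    ξ * h x - ∫ r in (0:ℝ)..ξ, h r ≤ x * h x - ∫ r in (0:ℝ)..x, h r := by
  have hsubgrad : (ξ - x) * h x ≤ ∫ r in x..ξ, h r :=
    sub_mul_le_intervalIntegral_of_monotoneOn (hmono.monotoneOn _)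
  have hsplit : (∫ r in (0:ℝ)..x, h r) + ∫ r in x..ξ, h r = ∫ r in (0:ℝ)..ξ, h r :=
    intervalIntegral.integral_add_adjacent_intervals
      hmono.intervalIntegrable hmono.intervalIntegrable
  linarith

theorem Rconj_apply_eq (hmono : Monotone h) (x : ℝ) :
    Rconj h (h x) = x * h x - ∫ r in (0:ℝ)..x, h r :=
  IsGreatest.csSup_eq ⟨⟨x, rfl⟩,
    Set.forall_mem_range.2 (mul_sub_integral_le_mul_sub_integral hmono x)⟩

theorem Rconj_apply_nonneg (hmono : Monotone h) (x : ℝ) : 0 ≤ Rconj h (h x) := by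
  rw [Rconj_apply_eq hmono]
  simpa using mul_sub_integral_le_mul_sub_integral hmono x 0

theorem Rconj_apply_le_mul_sub (hmono : Monotone h) (x : ℝ) : Rconj h (h x) ≤ x * (h x - h 0) := by
  have hsubgrad : (x - 0) * h 0 ≤ ∫ r in (0:ℝ)..x, h r :=
    sub_mul_le_intervalIntegral_of_monotoneOn (hmono.monotoneOn _)
  rw [Rconj_apply_eq hmono]
  linarith

theorem Rconj_apply_le_abs_mul (hmono : Monotone h) (x : ℝ) :
    Rconj h (h x) ≤ |x| * (|h x| + |h 0|) :=
  calc Rconj h (h x) ≤ x * (h x - h 0) := Rconj_apply_le_mul_sub hmono x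
    _ ≤ |x| * |h x - h 0| := (le_abs_self _).trans_eq (abs_mul _ _)
    _ ≤ |x| * (|h x| + |h 0|) := by gcongr; exact abs_sub _ _

theorem measurable_Rconj_apply (hmono : Monotone h) : Measurable fun x => Rconj h (h x) := by
  have hprim : Continuous fun x => ∫ r in (0:ℝ)..x, h r :=
    intervalIntegral.continuous_primitive (fun _ _ => hmono.intervalIntegrable) 0
  simp only [Rconj_apply_eq hmono]
  exact (measurable_id.mul hmono.measurable).sub hprim.measurable

theorem integrable_Rconj_apply (hmono : Monotone h) {μ : Measure ℝ}
    (hμ : Integrable (fun x => x * (h x - h 0)) μ) :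
    Integrable (fun x => Rconj h (h x)) μ := by
  refine hμ.mono' (measurable_Rconj_apply hmono).aestronglyMeasurable (.of_forall fun x => ?_)
  rw [Real.norm_of_nonneg (Rconj_apply_nonneg hmono x)]
  exact Rconj_apply_le_mul_sub hmono x

theorem stmt4_general (hmono : Monotone h) {μ : Measure ℝ}
    (hμ : Integrable (fun x => x * (h x - h 0)) μ) :
    (∀ x : ℝ,
      0 ≤ Rconj h (h x) ∧
      Rconj h (h x) = |x * h x - ∫ r in (0:ℝ)..x, h r| ∧
      Rconj h (h x) ≤ |x| * (|h x| + |h 0|)) ∧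
    Integrable (fun x => Rconj h (h x)) μ := by
  refine ⟨fun x => ⟨Rconj_apply_nonneg hmono x, ?_, Rconj_apply_le_abs_mul hmono x⟩,
    integrable_Rconj_apply hmono hμ⟩
  rw [← Rconj_apply_eq hmono, abs_of_nonneg (Rconj_apply_nonneg hmono x)]

end

/-- for every `x`, `0 ≤ R^c(0,h(x)) = |x h(x) − ∫_0^x h| ≤ |x|(|h(x)|+|h(0)|)`,
and `x ↦ R^c(0,h(x))` is integrable with respect to the standard Gaussian measure. -/
theorem stmt4 (h : ℝ → ℝ) (hmono : Monotone h)
    (hL2 : Integrable (fun x => (h x) ^ 2) (gaussianReal 0 1)) :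
    (∀ x : ℝ,
      0 ≤ Rconj h (h x) ∧
      Rconj h (h x) = |x * h x - ∫ r in (0:ℝ)..x, h r| ∧
      Rconj h (h x) ≤ |x| * (|h x| + |h 0|)) ∧
    Integrable (fun x => Rconj h (h x)) (gaussianReal 0 1) := by
  have hh : MemLp h 2 (gaussianReal 0 1) :=
    (memLp_two_iff_integrable_sq hmono.measurable.aestronglyMeasurable).2 hL2
  exact stmt4_general hmono
    (MemLp.integrable_mul (p := 2) (memLp_id_gaussianReal 2) (hh.sub (memLp_const (h 0))))
end

section
/- Let h : ℝ → ℝ be nondecreasing and integrable with respect to N(0,1), and set R_ξ(t,x) = ∫_ℝ h(x+ζ) p(t,ζ) dζ for t ∈ (0,1]. Then ∫_0^1 (1−u)^{-1/2} ( ∫_ℝ |R_ξ(1−u, x)| dN(0,u)(x) ) du ≤ 2 ∫_ℝ |h(z)| dN(0,1)(z) < ∞. -/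
open MeasureTheory ProbabilityTheory

/-- `R_ξ(t,x) = ∫ h(x+ζ) p(t,ζ) dζ` for `t ∈ (0,1]`. -/
noncomputable def Rxi (h : ℝ → ℝ) (t x : ℝ) : ℝ :=
  ∫ ζ : ℝ, h (x + ζ) * gaussDensity t ζ

/-! Moving the absolute value inside the integral bounds `|R_ξ(1 - u, ·)|` by the average of `|h|`
under `N(0, 1 - u)`. Since `N(0, u) ∗ N(0, 1 - u) = N(0, 1)`, the `N(0, u)`-integral of that average
is `∫ |h| dN(0, 1)`, whatever `u` is, and the weight `(1 - u)^(-1/2)` has total mass `2`. -/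

section Convolution

variable {M E : Type*} [AddMonoid M] [MeasurableSpace M] [MeasurableAdd₂ M]

lemma lintegral_conv₀ {μ ν : Measure M} [SFinite ν] {f : M → ENNReal}
    (hf : AEMeasurable f (μ ∗ ν)) :
    ∫⁻ z, f z ∂(μ ∗ ν) = ∫⁻ x, ∫⁻ y, f (x + y) ∂ν ∂μ := by
  rw [Measure.conv] at hf ⊢
  rw [lintegral_map' hf (by fun_prop)]
  exact lintegral_prod _ (hf.comp_measurable (by fun_prop))

lemma lintegral_enorm_integral_add_le_lintegral_conv [NormedAddCommGroup E] [NormedSpace ℝ E]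
    {μ ν : Measure M} [SFinite ν] {f : M → E} (hf : AEStronglyMeasurable f (μ ∗ ν)) :
    ∫⁻ x, ‖∫ y, f (x + y) ∂ν‖ₑ ∂μ ≤ ∫⁻ z, ‖f z‖ₑ ∂(μ ∗ ν) :=
  calc
    ∫⁻ x, ‖∫ y, f (x + y) ∂ν‖ₑ ∂μ ≤ ∫⁻ x, ∫⁻ y, ‖f (x + y)‖ₑ ∂ν ∂μ :=
      lintegral_mono fun _ ↦ enorm_integral_le_lintegral_enorm _
    _ = ∫⁻ z, ‖f z‖ₑ ∂(μ ∗ ν) := (lintegral_conv₀ hf.enorm).symm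

end Convolution

lemma lintegral_Ioo_sub_rpow {a b r : ℝ} (hab : a ≤ b) (hr : -1 < r) :
    ∫⁻ u in Set.Ioo a b, ENNReal.ofReal ((b - u) ^ r) =
      ENNReal.ofReal ((b - a) ^ (r + 1) / (r + 1)) := by
  have h_integrable : IntervalIntegrable (fun u ↦ (b - u) ^ r) volume a b := by
    simpa using
      (intervalIntegral.intervalIntegrable_rpow' (a := b - a) (b := 0) hr).comp_sub_left b
  have h_integral : ∫ u in a..b, (b - u) ^ r = (b - a) ^ (r + 1) / (r + 1) := by
    rw [intervalIntegral.integral_comp_sub_left (fun v ↦ v ^ r) b, integral_rpow (.inl hr),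
      sub_self, Real.zero_rpow (by linarith), sub_zero]
  have h_nonneg : 0 ≤ᵐ[volume.restrict (Set.Ioc a b)] fun u ↦ (b - u) ^ r :=
    ae_restrict_of_forall_mem measurableSet_Ioc fun _ hu ↦ Real.rpow_nonneg (sub_nonneg.2 hu.2) r
  rw [restrict_Ioo_eq_restrict_Ioc, ← h_integral, intervalIntegral.integral_of_le hab,
    ofReal_integral_eq_lintegral_ofReal
      ((intervalIntegrable_iff_integrableOn_Ioc_of_le hab).1 h_integrable) h_nonneg]

lemma gaussianReal_conv_gaussianReal_sub (m₁ m₂ : ℝ) {u t : ℝ} (hu : u ∈ Set.Icc 0 t) :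
    gaussianReal m₁ u.toNNReal ∗ gaussianReal m₂ (t - u).toNNReal =
      gaussianReal (m₁ + m₂) t.toNNReal := by
  rw [gaussianReal_conv_gaussianReal, ← Real.toNNReal_add hu.1 (sub_nonneg.2 hu.2), add_sub_cancel]

lemma gaussDensity_eq_gaussianPDFReal {t : ℝ} (ht : 0 ≤ t) :
    gaussDensity t = gaussianPDFReal 0 t.toNNReal := by
  ext ζ
  simp [gaussDensity, gaussianPDFReal, ht]

lemma Rxi_eq_integral_gaussianReal (h : ℝ → ℝ) {t : ℝ} (ht : 0 < t) (x : ℝ) :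
    Rxi h t x = ∫ ζ, h (x + ζ) ∂(gaussianReal 0 t.toNNReal) := by
  rw [integral_gaussianReal_eq_integral_smul (Real.toNNReal_pos.2 ht).ne',
    ← gaussDensity_eq_gaussianPDFReal ht.le]
  simp only [Rxi, smul_eq_mul, mul_comm]

lemma lintegral_abs_Rxi_le {h : ℝ → ℝ} {t u : ℝ}
    (hh : AEStronglyMeasurable h (gaussianReal 0 t.toNNReal)) (hu : u ∈ Set.Ico 0 t) :
    ∫⁻ x, ENNReal.ofReal |Rxi h (t - u) x| ∂(gaussianReal 0 u.toNNReal) ≤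
      ∫⁻ z, ENNReal.ofReal |h z| ∂(gaussianReal 0 t.toNNReal) := by
  have h_conv : gaussianReal 0 u.toNNReal ∗ gaussianReal 0 (t - u).toNNReal =
      gaussianReal 0 t.toNNReal := by
    simpa only [add_zero] using
      gaussianReal_conv_gaussianReal_sub 0 0 (Set.Ico_subset_Icc_self hu)
  rw [← h_conv] at hh ⊢
  simpa only [Rxi_eq_integral_gaussianReal h (sub_pos.2 hu.2), Real.enorm_eq_ofReal_abs] using
    lintegral_enorm_integral_add_le_lintegral_conv hh

lemma lintegral_mul_lintegral_abs_Rxi_le {h : ℝ → ℝ} {t : ℝ}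
    (hh : AEStronglyMeasurable h (gaussianReal 0 t.toNNReal)) {w : ℝ → ENNReal}
    (hw : Measurable w) :
    ∫⁻ u in Set.Ioo 0 t,
        w u * ∫⁻ x, ENNReal.ofReal |Rxi h (t - u) x| ∂(gaussianReal 0 u.toNNReal) ≤
      (∫⁻ u in Set.Ioo 0 t, w u) * ∫⁻ z, ENNReal.ofReal |h z| ∂(gaussianReal 0 t.toNNReal) := by
  rw [← lintegral_mul_const _ hw]
  refine setLIntegral_mono' measurableSet_Ioo fun u hu ↦ ?_
  exact mul_le_mul_right (lintegral_abs_Rxi_le hh (Set.Ioo_subset_Ico_self hu)) (w u)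

theorem stmt6_general {h : ℝ → ℝ} (hh : Integrable h (gaussianReal 0 1)) :
    (∫⁻ u in Set.Ioo (0 : ℝ) 1,
        ENNReal.ofReal ((1 - u) ^ (-(1:ℝ)/2)) *
          ∫⁻ x, ENNReal.ofReal |Rxi h (1 - u) x| ∂(gaussianReal 0 u.toNNReal))
      ≤ 2 * ∫⁻ z, ENNReal.ofReal |h z| ∂(gaussianReal 0 1) ∧
    2 * (∫⁻ z, ENNReal.ofReal |h z| ∂(gaussianReal 0 1)) < ⊤ := by
  have h_mass : ∫⁻ u in Set.Ioo (0 : ℝ) 1, ENNReal.ofReal ((1 - u) ^ (-(1 : ℝ) / 2)) = 2 := by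
    rw [lintegral_Ioo_sub_rpow zero_le_one (by norm_num)]
    norm_num
  have h_finite : ∫⁻ z, ENNReal.ofReal |h z| ∂(gaussianReal 0 1) < ⊤ :=
    (hasFiniteIntegral_iff_norm h).1 hh.hasFiniteIntegral
  rw [← Real.toNNReal_one] at hh h_finite ⊢
  refine ⟨?_, ENNReal.mul_lt_top ENNReal.ofNat_lt_top h_finite⟩
  exact (lintegral_mul_lintegral_abs_Rxi_le hh.aestronglyMeasurable (by fun_prop)).trans_eq
    (by rw [h_mass])

/-- for nondecreasing `h`, integrable with respect to `N(0,1)`,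
`∫_0^1 (1−u)^{-1/2} ( ∫ |R_ξ(1−u,x)| dN(0,u)(x) ) du ≤ 2 ∫ |h| dN(0,1) < ∞`. -/
theorem stmt6 (h : ℝ → ℝ) (hmono : Monotone h)
    (hL1 : Integrable (fun x => |h x|) (gaussianReal 0 1)) :
    (∫⁻ u in Set.Ioo (0 : ℝ) 1,
        ENNReal.ofReal ((1 - u) ^ (-(1:ℝ)/2)) *
          ∫⁻ x, ENNReal.ofReal |Rxi h (1 - u) x| ∂(gaussianReal 0 u.toNNReal))
      ≤ 2 * ∫⁻ z, ENNReal.ofReal |h z| ∂(gaussianReal 0 1) ∧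
    2 * (∫⁻ z, ENNReal.ofReal |h z| ∂(gaussianReal 0 1)) < ⊤ := by
  exact stmt6_general ((integrable_norm_iff hmono.measurable.aestronglyMeasurable).1 hL1)
end

section
/- Let X be a stochastic process on [0,1] with continuous sample paths, defined on a probability space, and let γ₀ ∈ (0,1). For M > 0 set F_M = ∫_0^1 ∫_0^1 exp( M |X_t − X_s| / |t−s|^{γ₀} ) dt ds. If E[F_M] < ∞ for every M > 0, then for every γ ∈ [0, γ₀) the pathwise γ-Hölder seminorm |X|_γ = sup_{0 ≤ s < t ≤ 1} |X_t − X_s| / |t−s|^γ satisfies E[ exp( k |X|_γ ) ] < ∞ for every k > 0. -/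
open MeasureTheory

open Set Filter
open scoped ENNReal Topology

/-!
This is the chaining argument of Garsia, Rodemich and Rumsey, applied path by path. Let `A` and `B`
be subsets of `[0,1]` whose points are at mutual distance at most `ρ`. By Jensen's inequality,
`|A| |B| exp (M ρ^(-γ₀) |⨍_A f - ⨍_B f|)` is at most the double integral `F_M` of `f`. Along sets
shrinking dyadically to a point `x`, successive averages therefore differ by at most
`ρ^γ₀ log (2 F_M / ρ²) / M` at scale `ρ`. A power of `ρ` absorbs the logarithm of `ρ`, and the
differences sum to a bound on `|⨍ f - f x|` of order `r^γ (log F_M + C) / M` for `γ < γ₀`, where `r`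
is the initial scale. Comparing `f s` and `f t` with the average over `[s,t]` bounds the `γ`-Hölder
seminorm by a multiple of `(log F_M + C) / M`. For `M` a suitable multiple of `k`, exponentiating
gives `exp (k |f|_γ) ≤ C' F_M`, and it remains to integrate over the probability space.
-/

section Jensen

variable {α β : Type*} [MeasurableSpace α] [MeasurableSpace β] {μ : Measure α} {ν : Measure β}
  [IsFiniteMeasure μ] [IsFiniteMeasure ν]

lemma measure_univ_mul_ofReal_exp_average_le {f : α → ℝ} (hf : Integrable f μ) :
    μ univ * ENNReal.ofReal (Real.exp (⨍ x, f x ∂μ))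
      ≤ ∫⁻ x, ENNReal.ofReal (Real.exp (f x)) ∂μ := by
  rcases eq_zero_or_neZero μ with rfl | hμ
  · simp
  have hexp_nonneg : 0 ≤ᵐ[μ] fun x => Real.exp (f x) := ae_of_all _ fun x => (Real.exp_pos _).le
  by_cases htop : ∫⁻ x, ENNReal.ofReal (Real.exp (f x)) ∂μ = ∞
  · exact htop ▸ le_top
  have hexp : Integrable (fun x => Real.exp (f x)) μ :=
    (lintegral_ofReal_ne_top_iff_integrable
      (Real.continuous_exp.comp_aestronglyMeasurable hf.1) hexp_nonneg).1 htop
  have hjensen : Real.exp (⨍ x, f x ∂μ) ≤ ⨍ x, Real.exp (f x) ∂μ :=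
    convexOn_exp.map_average_le Real.continuous_exp.continuousOn isClosed_univ
      (ae_of_all _ fun _ => mem_univ _) hf hexp
  calc μ univ * ENNReal.ofReal (Real.exp (⨍ x, f x ∂μ))
      ≤ μ univ * ENNReal.ofReal (⨍ x, Real.exp (f x) ∂μ) := by gcongr
    _ = ∫⁻ x, ENNReal.ofReal (Real.exp (f x)) ∂μ := by
        rw [ofReal_average hexp hexp_nonneg,
          ENNReal.mul_div_cancel (NeZero.ne _) (measure_ne_top _ _)]

lemma measure_univ_mul_ofReal_exp_average_sub_average_le {f : α → ℝ} {g : β → ℝ}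
    (hf : Integrable f μ) (hg : Integrable g ν) :
    μ univ * ν univ * ENNReal.ofReal (Real.exp ((⨍ x, f x ∂μ) - ⨍ y, g y ∂ν))
      ≤ ∫⁻ x, ∫⁻ y, ENNReal.ofReal (Real.exp (f x - g y)) ∂ν ∂μ := by
  have hofReal (a b : ℝ) : ENNReal.ofReal (Real.exp (a - b)) =
      ENNReal.ofReal (Real.exp a) * ENNReal.ofReal (Real.exp (-b)) := by
    rw [← ENNReal.ofReal_mul (Real.exp_pos _).le, ← Real.exp_add, sub_eq_add_neg]
  have hg_neg : Integrable (fun y => -g y) ν := hg.neg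
  have havg : (⨍ y, -g y ∂ν) = -⨍ y, g y ∂ν := integral_neg _
  simp_rw [hofReal]
  rw [lintegral_lintegral_mul hf.aemeasurable.exp.ennreal_ofReal
    hg_neg.aemeasurable.exp.ennreal_ofReal, mul_mul_mul_comm, ← havg]
  exact mul_le_mul' (measure_univ_mul_ofReal_exp_average_le hf)
    (measure_univ_mul_ofReal_exp_average_le hg_neg)

end Jensen

section ShrinkingSets

variable {α ι : Type*} {l : Filter ι} {I : ι → Set α} {S : Set α} {x : α}

lemma tendsto_smallSets_nhdsWithin_of_dist_le [PseudoMetricSpace α] {d : ι → ℝ}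
    (hIS : ∀ i, I i ⊆ S) (hx : ∀ i, x ∈ I i) (hd : ∀ i, ∀ y ∈ I i, ∀ z ∈ I i, dist y z ≤ d i)
    (hd0 : Tendsto d l (𝓝 0)) : Tendsto I l (𝓝[S] x).smallSets := by
  rw [tendsto_smallSets_iff]
  intro t ht
  obtain ⟨ε, hε, hball⟩ := Metric.mem_nhdsWithin_iff.1 ht
  filter_upwards [hd0.eventually_lt_const hε] with i hi y hy
  exact hball ⟨(hd i y hy x (hx i)).trans_lt hi, hIS i hy⟩

lemma tendsto_setAverage_of_continuousWithinAt {E : Type*} [NormedAddCommGroup E] [NormedSpace ℝ E]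
    [CompleteSpace E] [TopologicalSpace α] [MeasurableSpace α] {μ : Measure α} {f : α → E}
    (hf : ContinuousWithinAt f S x) (hI : Tendsto I l (𝓝[S] x).smallSets)
    (hmeas : ∀ i, MeasurableSet (I i)) (hpos : ∀ i, μ (I i) ≠ 0) (hfin : ∀ i, μ (I i) ≠ ∞)
    (hint : ∀ i, IntegrableOn f (I i) μ) :
    Tendsto (fun i => ⨍ y in I i, f y ∂μ) l (𝓝 (f x)) := by
  refine Metric.nhds_basis_closedBall.tendsto_right_iff.2 fun ε hε => ?_
  have hclose := tendsto_smallSets_iff.1 hI _ (hf (Metric.closedBall_mem_nhds (f x) hε))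
  filter_upwards [hclose] with i hi
  exact (convex_closedBall (f x) ε).set_average_mem Metric.isClosed_closedBall (hpos i) (hfin i)
    (ae_restrict_of_forall_mem (hmeas i) hi) (hint i)

end ShrinkingSets

/-- The functional `F_M` of a path `f` on `[0,1]` for the Hölder exponent `γ`. Paths take values in
a pseudometric space, with the distance playing the role of `|f t - f s|`. -/
noncomputable def holderExpIntegral {E : Type*} [PseudoMetricSpace E] (f : ℝ → E) (γ M : ℝ) :
    ℝ≥0∞ :=
  ∫⁻ t in Icc (0 : ℝ) 1, ∫⁻ s in Icc (0 : ℝ) 1,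
    ENNReal.ofReal (Real.exp (M * (dist (f t) (f s) / |t - s| ^ γ)))

section HolderExpIntegral

variable {E F : Type*} [PseudoMetricSpace E] [PseudoMetricSpace F] {M : ℝ}

lemma holderExpIntegral_mono {f : ℝ → E} {g : ℝ → F} (γ : ℝ) (hM : 0 ≤ M)
    (hfg : ∀ t s, dist (f t) (f s) ≤ dist (g t) (g s)) :
    holderExpIntegral f γ M ≤ holderExpIntegral g γ M := by
  unfold holderExpIntegral
  gcongr
  exact hfg _ _

lemma one_le_holderExpIntegral (f : ℝ → E) (γ : ℝ) (hM : 0 ≤ M) :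
    1 ≤ holderExpIntegral f γ M := by
  calc (1 : ℝ≥0∞) = ∫⁻ _ in Icc (0 : ℝ) 1, ∫⁻ _ in Icc (0 : ℝ) 1, 1 := by simp
    _ ≤ holderExpIntegral f γ M := by
      refine lintegral_mono fun t => lintegral_mono fun s => ?_
      rw [← ENNReal.ofReal_one]
      exact ENNReal.ofReal_le_ofReal (Real.one_le_exp (by positivity))

lemma one_le_toReal_holderExpIntegral {f : ℝ → E} {γ : ℝ} (hM : 0 ≤ M)
    (hF : holderExpIntegral f γ M ≠ ∞) : 1 ≤ (holderExpIntegral f γ M).toReal := by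
  simpa using ENNReal.toReal_mono hF (one_le_holderExpIntegral f γ hM)

end HolderExpIntegral

section Averages

variable {f : ℝ → ℝ} {γ M ρ : ℝ} {A B : Set ℝ}

lemma volume_mul_ofReal_exp_setAverage_sub_le (hγ : 0 ≤ γ) (hM : 0 ≤ M)
    (hfA : IntegrableOn f A) (hfB : IntegrableOn f B)
    (hA : MeasurableSet A) (hB : MeasurableSet B) (hA01 : A ⊆ Icc 0 1) (hB01 : B ⊆ Icc 0 1)
    (hdist : ∀ x ∈ A, ∀ y ∈ B, |x - y| ≤ ρ) :
    volume A * volume B *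
        ENNReal.ofReal (Real.exp (M / ρ ^ γ * ((⨍ x in A, f x) - ⨍ y in B, f y)))
      ≤ holderExpIntegral f γ M := by
  set K := M / ρ ^ γ with hK
  have : IsFiniteMeasure (volume.restrict A) :=
    isFiniteMeasure_restrict.2 (measure_ne_top_of_subset hA01 (by simp))
  have : IsFiniteMeasure (volume.restrict B) :=
    isFiniteMeasure_restrict.2 (measure_ne_top_of_subset hB01 (by simp))
  have havg (S : Set ℝ) : ⨍ x in S, K * f x = K * ⨍ x in S, f x := integral_const_mul _ _
  have hjensen := measure_univ_mul_ofReal_exp_average_sub_average_le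
    (hfA.const_mul K) (hfB.const_mul K)
  rw [havg, havg, ← mul_sub, Measure.restrict_apply_univ, Measure.restrict_apply_univ] at hjensen
  have hpointwise (x) (hx : x ∈ A) (y) (hy : y ∈ B) :
      K * f x - K * f y ≤ M * (dist (f x) (f y) / |x - y| ^ γ) := by
    rcases eq_or_ne x y with rfl | hxy
    · simp
    have : 0 < |x - y| := abs_pos.2 (sub_ne_zero.2 hxy)
    calc K * f x - K * f y = M * ((f x - f y) / ρ ^ γ) := by rw [hK]; ring
      _ ≤ M * (|f x - f y| / |x - y| ^ γ) := by
        gcongr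
        exacts [le_abs_self _, hdist x hx y hy]
  refine hjensen.trans <| (setLIntegral_mono' hA fun x hx => ?_).trans (lintegral_mono_set hA01)
  refine (setLIntegral_mono' hB fun y hy => ?_).trans (lintegral_mono_set hB01)
  exact ENNReal.ofReal_le_ofReal (Real.exp_le_exp.2 (hpointwise x hx y hy))

lemma mul_setAverage_sub_le_log (hγ : 0 ≤ γ) (hM : 0 ≤ M)
    (hfA : IntegrableOn f A) (hfB : IntegrableOn f B)
    (hA : MeasurableSet A) (hB : MeasurableSet B) (hA01 : A ⊆ Icc 0 1) (hB01 : B ⊆ Icc 0 1)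
    (hdist : ∀ x ∈ A, ∀ y ∈ B, |x - y| ≤ ρ)
    (hApos : 0 < volume.real A) (hBpos : 0 < volume.real B)
    (hF : holderExpIntegral f γ M ≠ ∞) :
    M / ρ ^ γ * ((⨍ x in A, f x) - ⨍ y in B, f y)
      ≤ Real.log ((holderExpIntegral f γ M).toReal / (volume.real A * volume.real B)) := by
  have hFpos := zero_lt_one.trans_le (one_le_toReal_holderExpIntegral hM hF)
  rw [Real.le_log_iff_exp_le (by positivity), le_div_iff₀' (by positivity)]
  simpa [measureReal_def, (Real.exp_pos _).le] using ENNReal.toReal_mono hF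
    (volume_mul_ofReal_exp_setAverage_sub_le hγ hM hfA hfB hA hB hA01 hB01 hdist)

lemma abs_setAverage_sub_le_log (hγ : 0 ≤ γ) (hM : 0 < M) (hρ : 0 < ρ)
    (hfA : IntegrableOn f A) (hfB : IntegrableOn f B)
    (hA : MeasurableSet A) (hB : MeasurableSet B) (hA01 : A ⊆ Icc 0 1) (hB01 : B ⊆ Icc 0 1)
    (hdist : ∀ x ∈ A, ∀ y ∈ B, |x - y| ≤ ρ)
    (hApos : 0 < volume.real A) (hBpos : 0 < volume.real B)
    (hF : holderExpIntegral f γ M ≠ ∞) :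
    |(⨍ x in A, f x) - ⨍ y in B, f y| ≤ ρ ^ γ *
      Real.log ((holderExpIntegral f γ M).toReal / (volume.real A * volume.real B)) / M := by
  have hAB := mul_setAverage_sub_le_log hγ hM.le hfA hfB hA hB hA01 hB01 hdist hApos hBpos hF
  have hBA := mul_setAverage_sub_le_log hγ hM.le hfB hfA hB hA hB01 hA01
    (fun y hy x hx => abs_sub_comm x y ▸ hdist x hx y hy) hBpos hApos hF
  rw [mul_comm (volume.real B)] at hBA
  have hρM : 0 < M / ρ ^ γ := by positivity
  rw [← le_div_iff₀' hρM, div_div_eq_mul_div, mul_comm _ (ρ ^ γ)] at hAB hBA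
  exact abs_sub_le_iff.2 ⟨hAB, hBA⟩

end Averages

lemma one_sub_half_rpow_pos {δ : ℝ} (hδ : 0 < δ) : 0 < 1 - ((1 : ℝ) / 2) ^ δ :=
  sub_pos.2 (Real.rpow_lt_one (by norm_num) (by norm_num) hδ)

lemma rpow_two_mul_mul_log_div_sq_le {δ ρ a : ℝ} (hδ : 0 < δ) (hρ : 0 < ρ) (hρ1 : ρ ≤ 1)
    (ha : 1 ≤ a) : ρ ^ (2 * δ) * Real.log (a / ρ ^ 2) ≤ ρ ^ δ * (Real.log a + 2 / δ) := by
  have hlog : Real.log (a / ρ ^ 2) = Real.log a - 2 * Real.log ρ := by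
    rw [Real.log_div (by positivity) (by positivity), Real.log_pow]
    norm_cast
  have habsorb : -(Real.log ρ * ρ ^ δ) ≤ 1 / δ :=
    (neg_le_abs _).trans (Real.abs_log_mul_self_rpow_lt ρ δ hρ hρ1 hδ).le
  have hlog_a : ρ ^ δ * Real.log a ≤ Real.log a :=
    mul_le_of_le_one_left (Real.log_nonneg ha) (Real.rpow_le_one hρ.le hρ1 hδ.le)
  calc ρ ^ (2 * δ) * Real.log (a / ρ ^ 2)
      = ρ ^ δ * (ρ ^ δ * Real.log a + 2 * -(Real.log ρ * ρ ^ δ)) := by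
        rw [hlog, two_mul δ, Real.rpow_add hρ]; ring
    _ ≤ ρ ^ δ * (Real.log a + 2 * (1 / δ)) := by gcongr
    _ = ρ ^ δ * (Real.log a + 2 / δ) := by ring

section Chaining

variable {f : ℝ → ℝ} {γ δ M : ℝ}

lemma abs_setAverage_sub_setAverage_half_le {A B : Set ℝ} {ρ : ℝ} (hγ : 0 ≤ γ) (hδ : 0 < δ)
    (hM : 0 < M) (hF : holderExpIntegral f (γ + 2 * δ) M ≠ ∞) (hρ : 0 < ρ) (hρ1 : ρ ≤ 1)
    (hfA : IntegrableOn f A) (hA : MeasurableSet A) (hB : MeasurableSet B) (hA01 : A ⊆ Icc 0 1)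
    (hBA : B ⊆ A) (hdist : ∀ x ∈ A, ∀ y ∈ A, |x - y| ≤ ρ)
    (hvolA : volume.real A = ρ) (hvolB : volume.real B = ρ / 2) :
    |(⨍ x in A, f x) - ⨍ y in B, f y| ≤ ρ ^ γ * ρ ^ δ *
      ((Real.log (2 * (holderExpIntegral f (γ + 2 * δ) M).toReal) + 2 / δ) / M) := by
  have hF1 := one_le_toReal_holderExpIntegral hM.le hF
  have hosc := abs_setAverage_sub_le_log (by positivity) hM hρ hfA (hfA.mono_set hBA) hA hB hA01
    (hBA.trans hA01) (fun x hx y hy => hdist x hx y (hBA hy)) (by linarith) (by linarith) hF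
  set F := (holderExpIntegral f (γ + 2 * δ) M).toReal
  have hF2 : 1 ≤ 2 * F := by linarith
  have hratio : F / (volume.real A * volume.real B) = 2 * F / ρ ^ 2 := by
    rw [hvolA, hvolB]; field_simp
  calc |(⨍ x in A, f x) - ⨍ y in B, f y|
      ≤ ρ ^ (γ + 2 * δ) * Real.log (2 * F / ρ ^ 2) / M := hratio ▸ hosc
    _ = ρ ^ γ * (ρ ^ (2 * δ) * Real.log (2 * F / ρ ^ 2)) / M := by
        rw [Real.rpow_add hρ, mul_assoc]
    _ ≤ ρ ^ γ * (ρ ^ δ * (Real.log (2 * F) + 2 / δ)) / M := by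
        gcongr ρ ^ γ * ?_ / M
        exact rpow_two_mul_mul_log_div_sq_le hδ hρ hρ1 hF2
    _ = ρ ^ γ * ρ ^ δ * ((Real.log (2 * F) + 2 / δ) / M) := by ring

lemma abs_setAverage_sub_le_of_dyadic_shrinking {I : ℕ → Set ℝ} {r x : ℝ}
    (hf : ContinuousOn f (Icc 0 1)) (hγ : 0 ≤ γ) (hδ : 0 < δ) (hM : 0 < M)
    (hF : holderExpIntegral f (γ + 2 * δ) M ≠ ∞) (hr : 0 < r) (hr1 : r ≤ 1)
    (hI : ∀ n, MeasurableSet (I n)) (hI_anti : Antitone I) (hI01 : I 0 ⊆ Icc 0 1)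
    (hvol : ∀ n, volume.real (I n) = r * (1 / 2) ^ n)
    (hdist : ∀ n, ∀ y ∈ I n, ∀ z ∈ I n, |y - z| ≤ r * (1 / 2) ^ n) (hx : ∀ n, x ∈ I n) :
    |(⨍ y in I 0, f y) - f x| ≤
      r ^ γ * ((Real.log (2 * (holderExpIntegral f (γ + 2 * δ) M).toReal) + 2 / δ) / M) /
        (1 - (1 / 2) ^ δ) := by
  have hF1 := one_le_toReal_holderExpIntegral hM.le hF
  set C := (Real.log (2 * (holderExpIntegral f (γ + 2 * δ) M).toReal) + 2 / δ) / M
  have hC0 : 0 ≤ C := by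
    have := Real.log_nonneg (show 1 ≤ 2 * (holderExpIntegral f (γ + 2 * δ) M).toReal by linarith)
    positivity
  have hsub (n) : I n ⊆ Icc 0 1 := (hI_anti n.zero_le).trans hI01
  have hint (n) : IntegrableOn f (I n) := hf.integrableOn_Icc.mono_set (hsub n)
  have hpow (n : ℕ) : ((1 : ℝ) / 2) ^ n ≤ 1 := pow_le_one₀ (by norm_num) (by norm_num)
  have hstep (n) : dist (⨍ y in I n, f y) (⨍ y in I (n + 1), f y)
      ≤ r ^ γ * C * ((1 / 2) ^ δ) ^ n := by
    have hscale : (0 : ℝ) < r * (1 / 2) ^ n := by positivity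
    calc dist (⨍ y in I n, f y) (⨍ y in I (n + 1), f y)
        ≤ (r * (1 / 2) ^ n) ^ γ * (r * (1 / 2) ^ n) ^ δ * C :=
          abs_setAverage_sub_setAverage_half_le hγ hδ hM hF hscale
            (mul_le_one₀ hr1 (by positivity) (hpow n)) (hint n) (hI n) (hI (n + 1)) (hsub n)
            (hI_anti n.le_succ) (hdist n) (hvol n) (by rw [hvol, pow_succ]; ring)
      _ ≤ r ^ γ * ((1 / 2) ^ n) ^ δ * C := by
          gcongr
          exacts [mul_le_of_le_one_right hr.le (hpow n), mul_le_of_le_one_left (by positivity) hr1]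
      _ = r ^ γ * C * ((1 / 2) ^ δ) ^ n := by rw [Real.rpow_pow_comm (by norm_num)]; ring
  have hscale_zero : Tendsto (fun n : ℕ => r * (1 / 2) ^ n) atTop (𝓝 0) := by
    simpa using (tendsto_pow_atTop_nhds_zero_of_lt_one (r := (1 : ℝ) / 2)
      (by norm_num) (by norm_num)).const_mul r
  have hlim : Tendsto (fun n => ⨍ y in I n, f y) atTop (𝓝 (f x)) :=
    tendsto_setAverage_of_continuousWithinAt (hf x (hsub 0 (hx 0)))
      (tendsto_smallSets_nhdsWithin_of_dist_le hsub hx hdist hscale_zero) hI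
      (fun n h => (by positivity : r * (1 / 2) ^ n ≠ 0) (by rw [← hvol n, measureReal_def, h]; rfl))
      (fun n => measure_ne_top_of_subset (hsub n) (by simp)) hint
  exact dist_le_of_le_geometric_of_tendsto₀ _ _
    (sub_pos.1 (one_sub_half_rpow_pos hδ)) hstep hlim

lemma abs_sub_le_of_holderExpIntegral_ne_top {s t : ℝ} (hf : ContinuousOn f (Icc 0 1))
    (hγ : 0 ≤ γ) (hδ : 0 < δ) (hM : 0 < M) (hF : holderExpIntegral f (γ + 2 * δ) M ≠ ∞)
    (hs : 0 ≤ s) (hst : s < t) (ht : t ≤ 1) :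
    |f t - f s| ≤ 2 * ((t - s) ^ γ *
      ((Real.log (2 * (holderExpIntegral f (γ + 2 * δ) M).toReal) + 2 / δ) / M) /
        (1 - (1 / 2) ^ δ)) := by
  have hr : 0 < t - s := sub_pos.2 hst
  have hscale_anti : Antitone fun n : ℕ => (t - s) * (1 / 2) ^ n :=
    (pow_right_anti₀ (by norm_num) (by norm_num)).const_mul hr.le
  have hscale_nonneg (n : ℕ) : 0 ≤ (t - s) * (1 / 2) ^ n := by positivity
  have hleft := abs_setAverage_sub_le_of_dyadic_shrinking
    (I := fun n => Icc s (s + (t - s) * (1 / 2) ^ n)) (x := s) hf hγ hδ hM hF hr (by linarith)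
    (fun n => measurableSet_Icc)
    (fun m n hmn => Icc_subset_Icc_right (by linarith [hscale_anti hmn]))
    (Icc_subset_Icc hs (by linarith))
    (fun n => by simp [measureReal_def, hr.le])
    (fun n y hy z hz => (Real.dist_le_of_mem_Icc hy hz).trans_eq (by ring))
    (fun n => left_mem_Icc.2 (by linarith [hscale_nonneg n]))
  have hright := abs_setAverage_sub_le_of_dyadic_shrinking
    (I := fun n => Icc (t - (t - s) * (1 / 2) ^ n) t) (x := t) hf hγ hδ hM hF hr (by linarith)
    (fun n => measurableSet_Icc)
    (fun m n hmn => Icc_subset_Icc_left (by linarith [hscale_anti hmn]))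
    (Icc_subset_Icc (by linarith) ht)
    (fun n => by simp [measureReal_def, hr.le])
    (fun n y hy z hz => (Real.dist_le_of_mem_Icc hy hz).trans_eq (by ring))
    (fun n => right_mem_Icc.2 (by linarith [hscale_nonneg n]))
  simp only [pow_zero, mul_one, add_sub_cancel, sub_sub_cancel] at hleft hright
  have htriangle := abs_sub_le (f t) (⨍ y in Icc s t, f y) (f s)
  rw [abs_sub_comm (f t) (⨍ y in Icc s t, f y)] at htriangle
  linarith

end Chaining

section Pathwise

variable {γ δ k s t : ℝ}

lemma ofReal_exp_abs_sub_div_rpow_le {f : ℝ → ℝ} (hf : ContinuousOn f (Icc 0 1)) (hγ : 0 ≤ γ)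
    (hδ : 0 < δ) (hk : 0 < k) (hs : 0 ≤ s) (hst : s < t) (ht : t ≤ 1) :
    ENNReal.ofReal (Real.exp (k * (|f t - f s| / (t - s) ^ γ))) ≤
      ENNReal.ofReal (2 * Real.exp (2 / δ)) *
        holderExpIntegral f (γ + 2 * δ) (2 * k / (1 - (1 / 2) ^ δ)) := by
  have hq := one_sub_half_rpow_pos hδ
  set M := 2 * k / (1 - (1 / 2) ^ δ) with hM_def
  have hM : 0 < M := by positivity
  by_cases hF : holderExpIntegral f (γ + 2 * δ) M = ∞
  · rw [hF, ENNReal.mul_top (by positivity)]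
    exact le_top
  have hF1 := one_le_toReal_holderExpIntegral hM.le hF
  have hincr := abs_sub_le_of_holderExpIntegral_ne_top hf hγ hδ hM hF hs hst ht
  rw [← ENNReal.ofReal_toReal hF, ← ENNReal.ofReal_mul (by positivity)]
  set F := (holderExpIntegral f (γ + 2 * δ) M).toReal
  have hr : 0 < (t - s) ^ γ := Real.rpow_pos_of_pos (sub_pos.2 hst) γ
  have hexponent : k * (|f t - f s| / (t - s) ^ γ) ≤ Real.log (2 * F) + 2 / δ := by
    calc k * (|f t - f s| / (t - s) ^ γ)
        ≤ k * (2 * ((t - s) ^ γ * ((Real.log (2 * F) + 2 / δ) / M) / (1 - (1 / 2) ^ δ)) /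
            (t - s) ^ γ) := by gcongr
      _ = Real.log (2 * F) + 2 / δ := by rw [hM_def]; field_simp
  refine ENNReal.ofReal_le_ofReal ?_
  calc Real.exp (k * (|f t - f s| / (t - s) ^ γ))
      ≤ Real.exp (Real.log (2 * F) + 2 / δ) := Real.exp_le_exp.2 hexponent
    _ = 2 * Real.exp (2 / δ) * F := by
        rw [Real.exp_add, Real.exp_log (by positivity)]; ring

-- The real-valued path `u ↦ dist (f u) (f s)` is dominated by `f` and has the same increment
-- from `s` to `t`.
lemma ofReal_exp_dist_div_rpow_le {E : Type*} [PseudoMetricSpace E] {f : ℝ → E}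
    (hf : ContinuousOn f (Icc 0 1)) (hγ : 0 ≤ γ) (hδ : 0 < δ) (hk : 0 < k)
    (hs : 0 ≤ s) (hst : s < t) (ht : t ≤ 1) :
    ENNReal.ofReal (Real.exp (k * (dist (f t) (f s) / (t - s) ^ γ))) ≤
      ENNReal.ofReal (2 * Real.exp (2 / δ)) *
        holderExpIntegral f (γ + 2 * δ) (2 * k / (1 - (1 / 2) ^ δ)) := by
  have hq := one_sub_half_rpow_pos hδ
  have hreal := ofReal_exp_abs_sub_div_rpow_le (f := fun u => dist (f u) (f s))
    (by fun_prop) hγ hδ hk hs hst ht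
  rw [dist_self, sub_zero, abs_of_nonneg dist_nonneg] at hreal
  refine hreal.trans ?_
  gcongr
  exact holderExpIntegral_mono _ (by positivity) fun u v => dist_dist_dist_le_left _ _ _

end Pathwise

theorem stmt8_general {Ω E : Type*} [MeasurableSpace Ω] [PseudoMetricSpace E] {P : Measure Ω}
    {X : Ω → ℝ → E} (hX : ∀ᵐ ω ∂P, ContinuousOn (X ω) (Icc 0 1)) {γ γ₀ k : ℝ} (hγ : 0 ≤ γ)
    (hγγ₀ : γ < γ₀) (hk : 0 < k) :
    ∫⁻ ω, (⨆ (s : ℝ) (t : ℝ) (_ : 0 ≤ s) (_ : s < t) (_ : t ≤ 1),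
        ENNReal.ofReal (Real.exp (k * (dist (X ω t) (X ω s) / (t - s) ^ γ)))) ∂P ≤
      ENNReal.ofReal (2 * Real.exp (4 / (γ₀ - γ))) *
        ∫⁻ ω, holderExpIntegral (X ω) γ₀ (2 * k / (1 - (1 / 2) ^ ((γ₀ - γ) / 2))) ∂P := by
  rw [← lintegral_const_mul' _ _ ENNReal.ofReal_ne_top]
  refine lintegral_mono_ae ?_
  filter_upwards [hX] with ω hω
  refine iSup_le fun s => iSup_le fun t => iSup_le fun hs => iSup_le fun hst => iSup_le fun ht => ?_
  have hδ : 0 < (γ₀ - γ) / 2 := half_pos (sub_pos.2 hγγ₀)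
  have hexponent : γ + 2 * ((γ₀ - γ) / 2) = γ₀ := by ring
  have hconst : 2 / ((γ₀ - γ) / 2) = 4 / (γ₀ - γ) := by rw [div_div_eq_mul_div]; norm_num
  rw [← hconst]
  simpa only [hexponent] using ofReal_exp_dist_div_rpow_le hω hγ hδ hk hs hst ht

/-- if `X` is a process on `[0,1]` with continuous paths such that
`F_M = ∫_0^1 ∫_0^1 exp(M |X_t − X_s| / |t−s|^{γ₀}) dt ds` has finite expectation for
every `M > 0`, then the pathwise `γ`-Hölder seminorm
`|X|_γ = sup_{0 ≤ s < t ≤ 1} |X_t − X_s|/(t−s)^γ` admits all exponential moments for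
every `γ ∈ [0,γ₀)`.  (The exponential moment is expressed in `ℝ≥0∞`, via the
supremum over all pairs `s < t`, so that paths with infinite seminorm contribute `∞`.) -/
theorem stmt8 {Ω : Type*} [MeasurableSpace Ω] (P : Measure Ω) [IsProbabilityMeasure P]
    (X : Ω → ℝ → ℝ) (hXmeas : Measurable (Function.uncurry X))
    (hXcont : ∀ ω, ContinuousOn (X ω) (Set.Icc 0 1))
    (γ₀ : ℝ) (hγ₀ : γ₀ ∈ Set.Ioo (0:ℝ) 1)
    (hF : ∀ M > (0:ℝ),
      (∫⁻ ω, (∫⁻ t in Set.Icc (0:ℝ) 1, ∫⁻ s in Set.Icc (0:ℝ) 1,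
        ENNReal.ofReal (Real.exp (M * (|X ω t - X ω s| / |t - s| ^ γ₀)))) ∂P) < ⊤)
    (γ : ℝ) (hγ : γ ∈ Set.Ico (0:ℝ) γ₀) (k : ℝ) (hk : 0 < k) :
    (∫⁻ ω, (⨆ (s : ℝ) (t : ℝ) (_ : 0 ≤ s) (_ : s < t) (_ : t ≤ 1),
      ENNReal.ofReal (Real.exp (k * (|X ω t - X ω s| / (t - s) ^ γ)))) ∂P) < ⊤ := by
  have hM : 0 < 2 * k / (1 - (1 / 2) ^ ((γ₀ - γ) / 2)) :=
    div_pos (by positivity) (one_sub_half_rpow_pos (half_pos (sub_pos.2 hγ.2)))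
  exact (stmt8_general (ae_of_all P hXcont) hγ.1 hγ.2 hk).trans_lt
    (ENNReal.mul_lt_top ENNReal.ofReal_lt_top (hF _ hM))
end

section
/- Let σ be a stochastic process on [0,1] with continuous nonnegative sample paths. Suppose there exist constants ε > 0 and γ₀ > 0 such that sup_{s ≠ t ∈ [0,1]} E[ exp( ε |σ_t² − σ_s²| / |t−s|^{γ₀} ) ] < ∞. Then for every γ ∈ [0, γ₀/2) the pathwise γ-Hölder seminorm |σ|_γ = sup_{0 ≤ s < t ≤ 1} |σ_t − σ_s| / |t−s|^γ satisfies E[ exp( k |σ|_γ ) ] < ∞ for every k > 0. -/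
open MeasureTheory
open scoped ENNReal

/-!
Kolmogorov chaining at the exponential scale. Sum the exponentials of the normalised increments of
a path over all dyadic intervals, giving those of length `2⁻ⁿ` the weight `4⁻ⁿ`: the sum `M` has
finite expectation, and each increment at level `n` is at most a constant times
`(log M + n log 4) 2⁻ⁿᵝ`. Lowering the exponent `β` absorbs the factor `n`, and chaining turns this
into a Hölder seminorm of order `log M`, which therefore has a small exponential moment. Applied to
`σ²`, this controls the *square* of the Hölder seminorm of `σ`, because
`|a - b|² ≤ |a² - b²|` for `a` and `b` of the same sign, and a continuous path vanishes in between
if it changes sign. Young's inequality then yields all exponential moments.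
-/

open Set Filter
open scoped Topology

section Chaining

variable {E : Type*} [PseudoMetricSpace E] {f : ℝ → E} {B b r s t x α β γ ε : ℝ} {n j : ℕ}

/-- The increment of the path `f` over the `j`-th dyadic interval `[j / 2ⁿ, (j + 1) / 2ⁿ]`. -/
noncomputable def dyadicIncrement (f : ℝ → E) (n j : ℕ) : ℝ :=
  dist (f ((j + 1) / 2 ^ n)) (f (j / 2 ^ n))

/-- The dyadic approximation of level `n` of `x` from below, meant for `0 ≤ x`. -/
noncomputable def dyadicFloor (n : ℕ) (x : ℝ) : ℝ :=
  ⌊2 ^ n * x⌋₊ / 2 ^ n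

lemma natFloor_two_pow_mul_le (hx : x ≤ 1) : ⌊2 ^ n * x⌋₊ ≤ 2 ^ n :=
  Nat.floor_le_of_le <| by
    push_cast
    exact mul_le_of_le_one_right (by positivity) hx

lemma dyadicFloor_mem_Icc (hx : x ≤ 1) : dyadicFloor n x ∈ Icc 0 1 :=
  ⟨by unfold dyadicFloor; positivity,
    div_le_one_of_le₀ (mod_cast natFloor_two_pow_mul_le hx) (by positivity)⟩

lemma tendsto_dyadicFloor (hx : 0 ≤ x) : Tendsto (dyadicFloor · x) atTop (𝓝 x) := by
  have h := (tendsto_nat_floor_mul_div_atTop hx).comp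
    (tendsto_pow_atTop_atTop_of_one_lt (one_lt_two (α := ℝ)))
  simpa only [dyadicFloor, Function.comp_def, mul_comm x] using h

lemma dyadicIncrement_nonneg : 0 ≤ dyadicIncrement f n j :=
  dist_nonneg

lemma nonneg_of_forall_dyadicIncrement_le (h : ∀ j < 2 ^ n, dyadicIncrement f n j ≤ b) : 0 ≤ b :=
  dyadicIncrement_nonneg.trans (h 0 (by positivity))

lemma dist_dyadic_le_of_le_succ (h : ∀ j < 2 ^ n, dyadicIncrement f n j ≤ b) {i j : ℕ}
    (hij : i ≤ j) (hji : j ≤ i + 1) (hj : j ≤ 2 ^ n) :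
    dist (f (j / 2 ^ n)) (f (i / 2 ^ n)) ≤ b := by
  obtain rfl | rfl : j = i ∨ j = i + 1 := by omega
  · rw [dist_self]
    exact nonneg_of_forall_dyadicIncrement_le h
  · push_cast
    exact h i hj

lemma dist_dyadicFloor_succ_le (h : ∀ j < 2 ^ (n + 1), dyadicIncrement f (n + 1) j ≤ b)
    (hx : x ≤ 1) : dist (f (dyadicFloor (n + 1) x)) (f (dyadicFloor n x)) ≤ b := by
  have hfloor : ⌊2 ^ n * x⌋₊ = ⌊2 ^ (n + 1) * x⌋₊ / 2 := by
    rw [← Nat.floor_div_ofNat]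
    congr 1
    ring
  have hpoint : dyadicFloor n x = (2 * ⌊2 ^ n * x⌋₊ : ℕ) / 2 ^ (n + 1) := by
    rw [dyadicFloor, pow_succ']
    push_cast
    rw [mul_div_mul_left _ _ two_ne_zero]
  rw [hpoint]
  exact dist_dyadic_le_of_le_succ h (by omega) (by omega) (natFloor_two_pow_mul_le hx)

lemma dist_dyadicFloor_dyadicFloor_le (h : ∀ j < 2 ^ n, dyadicIncrement f n j ≤ b)
    (hs : 0 ≤ s) (hst : s ≤ t) (ht : t ≤ 1) (hn : t - s ≤ (1 / 2) ^ n) :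
    dist (f (dyadicFloor n t)) (f (dyadicFloor n s)) ≤ b := by
  have hgap : 2 ^ n * t ≤ 2 ^ n * s + 1 := by
    have : 2 ^ n * (t - s) ≤ 1 := by
      rwa [one_div, inv_pow, ← one_div, le_div_iff₀' (by positivity)] at hn
    linarith
  refine dist_dyadic_le_of_le_succ h (Nat.floor_le_floor (by gcongr)) ?_
    (natFloor_two_pow_mul_le ht)
  rw [← Nat.floor_add_one (by positivity)]
  exact Nat.floor_le_floor hgap

lemma dist_dyadicFloor_le (hf : ContinuousOn f (Icc 0 1)) (hr₀ : 0 ≤ r) (hr₁ : r < 1)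
    (h : ∀ n, ∀ j < 2 ^ n, dyadicIncrement f n j ≤ B * r ^ n) (hx₀ : 0 ≤ x) (hx₁ : x ≤ 1)
    (n : ℕ) :
    dist (f (dyadicFloor n x)) (f x) ≤ B * r ^ n / (1 - r) := by
  have hB : 0 ≤ B := by simpa using nonneg_of_forall_dyadicIncrement_le (h 0)
  have hlim : Tendsto (fun m => f (dyadicFloor m x)) atTop (𝓝 (f x)) :=
    (hf x ⟨hx₀, hx₁⟩).tendsto.comp (tendsto_nhdsWithin_iff.2
      ⟨tendsto_dyadicFloor hx₀, .of_forall fun _ => dyadicFloor_mem_Icc hx₁⟩)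
  refine dist_le_of_le_geometric_of_tendsto r B hr₁ (fun m => ?_) hlim n
  calc dist (f (dyadicFloor m x)) (f (dyadicFloor (m + 1) x))
      ≤ B * r ^ (m + 1) := by
        rw [dist_comm]
        exact dist_dyadicFloor_succ_le (h (m + 1)) hx₁
    _ ≤ B * r ^ m :=
        mul_le_mul_of_nonneg_left (pow_le_pow_of_le_one hr₀ hr₁.le m.le_succ) hB

lemma dist_le_of_dyadicIncrement_le (hf : ContinuousOn f (Icc 0 1)) (hr₀ : 0 ≤ r) (hr₁ : r < 1)
    (h : ∀ n, ∀ j < 2 ^ n, dyadicIncrement f n j ≤ B * r ^ n)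
    (hs : 0 ≤ s) (hst : s ≤ t) (ht : t ≤ 1) (hn : t - s ≤ (1 / 2) ^ n) :
    dist (f t) (f s) ≤ (1 + 2 / (1 - r)) * (B * r ^ n) :=
  calc dist (f t) (f s)
      ≤ dist (f t) (f (dyadicFloor n t)) + dist (f (dyadicFloor n t)) (f (dyadicFloor n s))
        + dist (f (dyadicFloor n s)) (f s) := dist_triangle4 _ _ _ _
    _ ≤ B * r ^ n / (1 - r) + B * r ^ n + B * r ^ n / (1 - r) := by
        gcongr
        · rw [dist_comm]
          exact dist_dyadicFloor_le hf hr₀ hr₁ h (hs.trans hst) ht n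
        · exact dist_dyadicFloor_dyadicFloor_le (h n) hs hst ht hn
        · exact dist_dyadicFloor_le hf hr₀ hr₁ h hs (hst.trans ht) n
    _ = (1 + 2 / (1 - r)) * (B * r ^ n) := by ring

lemma half_rpow_pow (α : ℝ) (n : ℕ) : ((1 / 2 : ℝ) ^ α) ^ n = ((1 / 2) ^ n) ^ α :=
  Real.rpow_pow_comm (by norm_num) α n

lemma half_rpow_lt_one (hα : 0 < α) : (1 / 2 : ℝ) ^ α < 1 :=
  Real.rpow_lt_one (by norm_num) (by norm_num) hα

lemma exists_dist_le_mul_rpow_of_dyadicIncrement_le (E : Type*) [PseudoMetricSpace E]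
    (hα : 0 < α) :
    ∃ c > 0, ∀ (f : ℝ → E) (B : ℝ), ContinuousOn f (Icc 0 1) →
      (∀ n, ∀ j < 2 ^ n, dyadicIncrement f n j ≤ B * ((1 / 2) ^ n) ^ α) →
      ∀ s t, 0 ≤ s → s < t → t ≤ 1 → dist (f t) (f s) ≤ c * B * (t - s) ^ α := by
  set r : ℝ := (1 / 2) ^ α with hr
  have hr₀ : 0 < r := by positivity
  have hr₁ : 0 < 1 - r := sub_pos.2 (half_rpow_lt_one hα)
  refine ⟨(1 + 2 / (1 - r)) / r, by positivity, fun f B hf h s t hs hst ht => ?_⟩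
  simp only [← half_rpow_pow, ← hr] at h
  have hB : 0 ≤ B := by simpa using nonneg_of_forall_dyadicIncrement_le (h 0)
  obtain ⟨n, hlt, hle⟩ := exists_nat_pow_near_of_lt_one (sub_pos.2 hst)
    (by linarith : t - s ≤ 1) (by norm_num : (0 : ℝ) < 1 / 2) (by norm_num)
  have hpow : r ^ (n + 1) ≤ (t - s) ^ α := by
    rw [hr, half_rpow_pow]
    gcongr
  calc dist (f t) (f s)
      ≤ (1 + 2 / (1 - r)) * (B * r ^ n) :=
        dist_le_of_dyadicIncrement_le hf hr₀.le (sub_pos.1 hr₁) h hs hst.le ht hle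
    _ = (1 + 2 / (1 - r)) / r * B * r ^ (n + 1) := by field_simp; ring
    _ ≤ (1 + 2 / (1 - r)) / r * B * (t - s) ^ α := by gcongr

/-- The exponential, at rate `ε`, of the `j`-th dyadic increment of level `n` of `f`, normalised by
the `β`-th power of the length of the interval. -/
noncomputable def dyadicExp (ε β : ℝ) (f : ℝ → E) (n j : ℕ) : ℝ≥0∞ :=
  ENNReal.ofReal (Real.exp (ε * (dyadicIncrement f n j / ((1 / 2) ^ n) ^ β)))

/-- The weighted sum of all normalised dyadic exponentials of `f`. There are `2 ^ n` of them at
level `n`, so the weights `4 ^ (-n)` make the expectation summable. -/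
noncomputable def dyadicExpSum (ε β : ℝ) (f : ℝ → E) : ℝ≥0∞ :=
  ∑' n : ℕ, ∑ j ∈ Finset.range (2 ^ n), ENNReal.ofReal ((1 / 4) ^ n) * dyadicExp ε β f n j

lemma exp_dyadicIncrement_le (hM : dyadicExpSum ε β f ≠ ⊤) (hj : j < 2 ^ n) :
    Real.exp (ε * (dyadicIncrement f n j / ((1 / 2) ^ n) ^ β)) ≤
      4 ^ n * (dyadicExpSum ε β f).toReal := by
  have hterm : ENNReal.ofReal ((1 / 4) ^ n) * dyadicExp ε β f n j ≤ dyadicExpSum ε β f :=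
    (Finset.single_le_sum (f := fun j => ENNReal.ofReal ((1 / 4) ^ n) * dyadicExp ε β f n j)
      (fun _ _ => zero_le) (Finset.mem_range.2 hj)).trans (ENNReal.le_tsum n)
  rw [dyadicExp, ← ENNReal.ofReal_mul (by positivity)] at hterm
  have h := (ENNReal.ofReal_le_iff_le_toReal hM).1 hterm
  rwa [one_div, inv_pow, inv_mul_le_iff₀ (by positivity)] at h

lemma one_le_toReal_dyadicExpSum (hε : 0 ≤ ε) (hM : dyadicExpSum ε β f ≠ ⊤) :
    1 ≤ (dyadicExpSum ε β f).toReal := by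
  have h := exp_dyadicIncrement_le hM (n := 0) (j := 0) (by norm_num)
  rw [pow_zero 4, one_mul] at h
  refine (Real.one_le_exp (mul_nonneg hε ?_)).trans h
  exact div_nonneg dyadicIncrement_nonneg (by positivity)

lemma exists_nat_mul_pow_le (hr₀ : 0 ≤ r) (hr₁ : r < 1) : ∃ S, ∀ n : ℕ, n * r ^ n ≤ S := by
  obtain ⟨S, hS⟩ := (tendsto_self_mul_const_pow_of_lt_one hr₀ hr₁).bddAbove_range
  exact ⟨S, fun n => hS ⟨n, rfl⟩⟩

lemma exists_dyadicIncrement_le (E : Type*) [PseudoMetricSpace E] (hε : 0 < ε) (hα : α < β) :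
    ∃ S, ∀ f : ℝ → E, dyadicExpSum ε β f ≠ ⊤ → ∀ n, ∀ j < 2 ^ n,
      dyadicIncrement f n j ≤
        (Real.log (dyadicExpSum ε β f).toReal + S) / ε * ((1 / 2) ^ n) ^ α := by
  set q : ℝ := (1 / 2) ^ (β - α) with hq
  have hq₀ : 0 ≤ q := by positivity
  have hq₁ : q < 1 := half_rpow_lt_one (sub_pos.2 hα)
  obtain ⟨S, hS⟩ := exists_nat_mul_pow_le hq₀ hq₁
  refine ⟨S * Real.log 4, fun f hM n j hj => ?_⟩
  set m := (dyadicExpSum ε β f).toReal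
  have hm : 1 ≤ m := one_le_toReal_dyadicExpSum hε.le hM
  have hm₀ : 0 < m := one_pos.trans_le hm
  have hexp : ε * (dyadicIncrement f n j / ((1 / 2) ^ n) ^ β) ≤ Real.log m + n * Real.log 4 := by
    rw [add_comm, ← Real.log_pow, ← Real.log_mul (by positivity) hm₀.ne',
      Real.le_log_iff_exp_le (by positivity)]
    exact exp_dyadicIncrement_le hM hj
  have habsorb : (Real.log m + n * Real.log 4) * q ^ n ≤ Real.log m + S * Real.log 4 := by
    rw [add_mul, mul_right_comm]
    exact add_le_add
      (mul_le_of_le_one_right (Real.log_nonneg hm) (pow_le_one₀ hq₀ hq₁.le))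
      (mul_le_mul_of_nonneg_right (hS n) (Real.log_nonneg (by norm_num)))
  have hsplit : ((1 / 2 : ℝ) ^ n) ^ β = q ^ n * ((1 / 2) ^ n) ^ α := by
    rw [hq, half_rpow_pow, ← Real.rpow_add (by positivity), sub_add_cancel]
  rw [← mul_div_assoc, div_le_iff₀ (by positivity), hsplit] at hexp
  rw [div_mul_eq_mul_div, le_div_iff₀' hε]
  calc ε * dyadicIncrement f n j
      ≤ (Real.log m + n * Real.log 4) * q ^ n * ((1 / 2) ^ n) ^ α := by rwa [mul_assoc]
    _ ≤ (Real.log m + S * Real.log 4) * ((1 / 2) ^ n) ^ α := by gcongr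

lemma exists_exp_dist_le_mul_dyadicExpSum (E : Type*) [PseudoMetricSpace E]
    (hε : 0 < ε) (hβ : 0 < β) (hγ : γ < β) :
    ∃ δ > 0, ∃ A ≠ ⊤, ∀ f : ℝ → E, ContinuousOn f (Icc 0 1) →
      ∀ s t, 0 ≤ s → s < t → t ≤ 1 →
        ENNReal.ofReal (Real.exp (δ * (dist (f t) (f s) / (t - s) ^ γ))) ≤
          A * dyadicExpSum ε β f := by
  obtain ⟨α, hα, hαβ⟩ := exists_between (max_lt hγ hβ)
  obtain ⟨hγα, hα₀⟩ := max_lt_iff.1 hα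
  obtain ⟨S, hS⟩ := exists_dyadicIncrement_le E hε hαβ
  obtain ⟨c, hc, hchain⟩ := exists_dist_le_mul_rpow_of_dyadicIncrement_le E hα₀
  refine ⟨ε / c, by positivity, ENNReal.ofReal (Real.exp S), ENNReal.ofReal_ne_top,
    fun f hf s t hs hst ht => ?_⟩
  by_cases hM : dyadicExpSum ε β f = ⊤
  · rw [hM, ENNReal.mul_top (by simp [Real.exp_pos])]
    exact le_top
  set m := (dyadicExpSum ε β f).toReal with hm_def
  have hm : 0 < m := one_pos.trans_le (one_le_toReal_dyadicExpSum hε.le hM)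
  have hts : 0 < t - s := sub_pos.2 hst
  have hbound : 0 ≤ (Real.log m + S) / ε := by
    simpa using nonneg_of_forall_dyadicIncrement_le (hS f hM 0)
  have hdist : dist (f t) (f s) ≤ c * ((Real.log m + S) / ε) * (t - s) ^ γ := by
    refine (hchain f _ hf (hS f hM) s t hs hst ht).trans ?_
    gcongr ?_ * ?_
    exact Real.rpow_le_rpow_of_exponent_ge hts (by linarith) hγα.le
  have hexponent : ε / c * (dist (f t) (f s) / (t - s) ^ γ) ≤ S + Real.log m := by
    rw [← div_le_iff₀ (by positivity)] at hdist
    calc ε / c * (dist (f t) (f s) / (t - s) ^ γ)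
        ≤ ε / c * (c * ((Real.log m + S) / ε)) := by gcongr
      _ = S + Real.log m := by field_simp; ring
  calc ENNReal.ofReal (Real.exp (ε / c * (dist (f t) (f s) / (t - s) ^ γ)))
      ≤ ENNReal.ofReal (Real.exp (S + Real.log m)) := by gcongr
    _ = ENNReal.ofReal (Real.exp S) * dyadicExpSum ε β f := by
        rw [Real.exp_add, Real.exp_log hm, ENNReal.ofReal_mul (by positivity), hm_def,
          ENNReal.ofReal_toReal hM]

end Chaining

section Moments

variable {Ω : Type*} [MeasurableSpace Ω] {P : Measure Ω} {E : Type*} [PseudoMetricSpace E]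
  {X : Ω → ℝ → E} {β γ δ ε : ℝ} {C : ℝ≥0∞}

lemma lintegral_sum_dyadicExp_le {n : ℕ}
    (hmeas : ∀ j < 2 ^ n, AEMeasurable (fun ω => dyadicExp ε β (X ω) n j) P)
    (hC : ∀ j < 2 ^ n, ∫⁻ ω, dyadicExp ε β (X ω) n j ∂P ≤ C) :
    ∫⁻ ω, ∑ j ∈ Finset.range (2 ^ n), ENNReal.ofReal ((1 / 4) ^ n) * dyadicExp ε β (X ω) n j ∂P ≤
      2⁻¹ ^ n * C := by
  simp only [← Finset.mem_range] at hmeas hC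
  have hweight : (2 : ℝ≥0∞) ^ n * ENNReal.ofReal ((1 / 4) ^ n) = 2⁻¹ ^ n := by
    rw [← ENNReal.ofReal_ofNat 2, ← ENNReal.ofReal_inv_of_pos two_pos,
      ← ENNReal.ofReal_pow (by norm_num), ← ENNReal.ofReal_pow (by norm_num),
      ← ENNReal.ofReal_mul (by positivity), ← mul_pow]
    norm_num
  calc ∫⁻ ω, ∑ j ∈ Finset.range (2 ^ n), ENNReal.ofReal ((1 / 4) ^ n) * dyadicExp ε β (X ω) n j ∂P
      = ∑ j ∈ Finset.range (2 ^ n),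
          ENNReal.ofReal ((1 / 4) ^ n) * ∫⁻ ω, dyadicExp ε β (X ω) n j ∂P := by
        rw [lintegral_finsetSum' _ fun j hj => (hmeas j hj).const_mul _]
        exact Finset.sum_congr rfl fun j hj => lintegral_const_mul'' _ (hmeas j hj)
    _ ≤ ∑ _ ∈ Finset.range (2 ^ n), ENNReal.ofReal ((1 / 4) ^ n) * C :=
        Finset.sum_le_sum fun j hj => by gcongr; exact hC j hj
    _ = 2⁻¹ ^ n * C := by
        rw [Finset.sum_const, Finset.card_range, nsmul_eq_mul, ← mul_assoc, ← hweight]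
        push_cast
        rfl

lemma lintegral_dyadicExpSum_le
    (hmeas : ∀ n, ∀ j < 2 ^ n, AEMeasurable (fun ω => dyadicExp ε β (X ω) n j) P)
    (hC : ∀ n, ∀ j < 2 ^ n, ∫⁻ ω, dyadicExp ε β (X ω) n j ∂P ≤ C) :
    ∫⁻ ω, dyadicExpSum ε β (X ω) ∂P ≤ 2 * C :=
  calc ∫⁻ ω, dyadicExpSum ε β (X ω) ∂P
      = ∑' n : ℕ, ∫⁻ ω, ∑ j ∈ Finset.range (2 ^ n),
          ENNReal.ofReal ((1 / 4) ^ n) * dyadicExp ε β (X ω) n j ∂P :=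
        lintegral_tsum fun n => Finset.aemeasurable_fun_sum _ fun j hj =>
          (hmeas n j (Finset.mem_range.1 hj)).const_mul _
    _ ≤ ∑' n : ℕ, 2⁻¹ ^ n * C :=
        ENNReal.tsum_le_tsum fun n => lintegral_sum_dyadicExp_le (hmeas n) (hC n)
    _ = 2 * C := by rw [ENNReal.tsum_mul_right, ENNReal.tsum_geometric_two]

theorem exists_lintegral_iSup_exp_holder_lt_top
    (hXmeas : ∀ s ∈ Icc (0 : ℝ) 1, ∀ t ∈ Icc (0 : ℝ) 1,
      AEMeasurable (fun ω => dist (X ω t) (X ω s)) P)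
    (hXcont : ∀ ω, ContinuousOn (X ω) (Icc 0 1)) (hε : 0 < ε) (hβ : 0 < β)
    (hbound : ∃ C < ⊤, ∀ s t : ℝ, 0 ≤ s → s < t → t ≤ 1 →
      ∫⁻ ω, ENNReal.ofReal (Real.exp (ε * (dist (X ω t) (X ω s) / (t - s) ^ β))) ∂P ≤ C)
    (hγ : γ < β) :
    ∃ δ > 0, ∫⁻ ω, (⨆ (s : ℝ) (t : ℝ) (_ : 0 ≤ s) (_ : s < t) (_ : t ≤ 1),
      ENNReal.ofReal (Real.exp (δ * (dist (X ω t) (X ω s) / (t - s) ^ γ)))) ∂P < ⊤ := by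
  obtain ⟨C, hC, hbound⟩ := hbound
  obtain ⟨δ, hδ, A, hA, hle⟩ := exists_exp_dist_le_mul_dyadicExpSum E hε hβ hγ
  have hright : ∀ n j : ℕ, j < 2 ^ n → ((j : ℝ) + 1) / 2 ^ n ≤ 1 := fun n j hj =>
    div_le_one_of_le₀ (mod_cast hj) (by positivity)
  have hlt : ∀ n j : ℕ, (j : ℝ) / 2 ^ n < (j + 1) / 2 ^ n := fun n j => by
    gcongr
    exact lt_add_one _
  have hlength : ∀ n j : ℕ, ((j : ℝ) + 1) / 2 ^ n - j / 2 ^ n = (1 / 2) ^ n := fun n j => by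
    rw [← sub_div, add_sub_cancel_left, one_div_pow]
  have hmeas : ∀ n, ∀ j < 2 ^ n, AEMeasurable (fun ω => dyadicExp ε β (X ω) n j) P := fun n j hj =>
    (((hXmeas _ ⟨by positivity, (hlt n j).le.trans (hright n j hj)⟩
      _ ⟨by positivity, hright n j hj⟩).div_const _).const_mul ε).exp.ennreal_ofReal
  have hsum : ∫⁻ ω, dyadicExpSum ε β (X ω) ∂P ≤ 2 * C :=
    lintegral_dyadicExpSum_le hmeas fun n j hj => by
      simpa only [dyadicExp, dyadicIncrement, hlength] using
        hbound _ _ (by positivity) (hlt n j) (hright n j hj)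
  refine ⟨δ, hδ, ?_⟩
  calc _ ≤ ∫⁻ ω, A * dyadicExpSum ε β (X ω) ∂P := lintegral_mono fun ω =>
        iSup₂_le fun s t => iSup₂_le fun hs hst => iSup_le fun ht =>
          hle (X ω) (hXcont ω) s t hs hst ht
    _ = A * ∫⁻ ω, dyadicExpSum ε β (X ω) ∂P := lintegral_const_mul' _ _ hA
    _ < ⊤ := ENNReal.mul_lt_top hA.lt_top
        (hsum.trans_lt (ENNReal.mul_lt_top ENNReal.ofNat_lt_top hC))

lemma lintegral_iSup_lt_top_of_le_mul {u v : Ω → ℝ → ℝ → ℝ≥0∞} (hC : C ≠ ⊤)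
    (huv : ∀ ω s t, 0 ≤ s → s < t → t ≤ 1 →
      ∃ s' t', 0 ≤ s' ∧ s' < t' ∧ t' ≤ 1 ∧ u ω s t ≤ C * v ω s' t')
    (hv : ∫⁻ ω, (⨆ (s : ℝ) (t : ℝ) (_ : 0 ≤ s) (_ : s < t) (_ : t ≤ 1), v ω s t) ∂P < ⊤) :
    ∫⁻ ω, (⨆ (s : ℝ) (t : ℝ) (_ : 0 ≤ s) (_ : s < t) (_ : t ≤ 1), u ω s t) ∂P < ⊤ := by
  refine lt_of_le_of_lt (lintegral_mono fun ω => ?_)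
    ((lintegral_const_mul' C _ hC).trans_lt (ENNReal.mul_lt_top hC.lt_top hv))
  refine iSup₂_le fun s t => iSup₂_le fun hs hst => iSup_le fun ht => ?_
  obtain ⟨s', t', hs', hst', ht', hle⟩ := huv ω s t hs hst ht
  refine hle.trans ?_
  gcongr
  exact le_iSup₂_of_le s' t' (le_iSup₂_of_le hs' hst' (le_iSup_of_le ht' le_rfl))

lemma lintegral_iSup_exp_mul_lt_top_of_sq {x : Ω → ℝ → ℝ → ℝ} (hδ : 0 < δ)
    (h : ∫⁻ ω, (⨆ (s : ℝ) (t : ℝ) (_ : 0 ≤ s) (_ : s < t) (_ : t ≤ 1),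
      ENNReal.ofReal (Real.exp (δ * x ω s t ^ 2))) ∂P < ⊤) (k : ℝ) :
    ∫⁻ ω, (⨆ (s : ℝ) (t : ℝ) (_ : 0 ≤ s) (_ : s < t) (_ : t ≤ 1),
      ENNReal.ofReal (Real.exp (k * x ω s t))) ∂P < ⊤ := by
  refine lintegral_iSup_lt_top_of_le_mul (C := ENNReal.ofReal (Real.exp (k ^ 2 / (4 * δ))))
    ENNReal.ofReal_ne_top (fun ω s t hs hst ht => ⟨s, t, hs, hst, ht, ?_⟩) h
  have young : k * x ω s t ≤ k ^ 2 / (4 * δ) + δ * x ω s t ^ 2 := by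
    have hsq : k ^ 2 / (4 * δ) + δ * x ω s t ^ 2 - k * x ω s t =
        (2 * δ * x ω s t - k) ^ 2 / (4 * δ) := by
      field_simp
      ring
    rw [← sub_nonneg, hsq]
    positivity
  rw [← ENNReal.ofReal_mul (by positivity), ← Real.exp_add]
  gcongr

end Moments

lemma sq_sub_le_abs_sq_sub_sq {R : Type*} [CommRing R] [LinearOrder R] [IsStrictOrderedRing R]
    {a b : R} (hab : 0 ≤ a * b) : (a - b) ^ 2 ≤ |a ^ 2 - b ^ 2| := by
  have hsq : (a - b) ^ 2 ≤ (a + b) ^ 2 := by nlinarith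
  calc (a - b) ^ 2 = |a - b| * |a - b| := by rw [abs_mul_abs_self, sq]
    _ ≤ |a + b| * |a - b| := mul_le_mul_of_nonneg_right (sq_le_sq.1 hsq) (abs_nonneg _)
    _ = |a ^ 2 - b ^ 2| := by rw [← abs_mul, sq_sub_sq]

lemma exists_eq_zero_of_mul_neg {f : ℝ → ℝ} {s t : ℝ}
    (hf : ContinuousOn f (Icc s t)) (hst : s ≤ t) (h : f t * f s < 0) :
    ∃ u ∈ Ioo s t, f u = 0 := by
  have hzero : (0 : ℝ) ∈ uIcc (f s) (f t) := by
    rw [mem_uIcc]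
    rcases mul_neg_iff.1 h with ⟨h₁, h₂⟩ | ⟨h₁, h₂⟩
    · exact .inl ⟨h₂.le, h₁.le⟩
    · exact .inr ⟨h₁.le, h₂.le⟩
  rw [← uIcc_of_le hst] at hf
  obtain ⟨u, hu, hfu⟩ := intermediate_value_uIcc hf hzero
  rw [uIcc_of_le hst] at hu
  refine ⟨u, ⟨hu.1.lt_of_ne ?_, hu.2.lt_of_ne ?_⟩, hfu⟩ <;>
    rintro rfl <;> simp [hfu] at h

lemma exists_sq_sub_le_four_mul_abs_sq_sub_sq {f : ℝ → ℝ} {s t : ℝ}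
    (hf : ContinuousOn f (Icc s t)) (hst : s < t) :
    ∃ s' t', s ≤ s' ∧ s' < t' ∧ t' ≤ t ∧ (f t - f s) ^ 2 ≤ 4 * |f t' ^ 2 - f s' ^ 2| := by
  rcases le_or_gt 0 (f t * f s) with hsign | hsign
  · exact ⟨s, t, le_rfl, hst, le_rfl, by
      linarith [sq_sub_le_abs_sq_sub_sq hsign, abs_nonneg (f t ^ 2 - f s ^ 2)]⟩
  obtain ⟨u, hu, hfu⟩ := exists_eq_zero_of_mul_neg hf hst.le hsign
  have hparallelogram := add_sq_le (a := f t) (b := -f s)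
  rw [← sub_eq_add_neg, neg_sq] at hparallelogram
  rcases le_total (f s ^ 2) (f t ^ 2) with hle | hle
  · refine ⟨u, t, hu.1.le, hu.2, le_rfl, ?_⟩
    rw [hfu, zero_pow two_ne_zero, sub_zero, abs_sq]
    linarith
  · refine ⟨s, u, le_rfl, hu.1, hu.2.le, ?_⟩
    rw [hfu, zero_pow two_ne_zero, zero_sub, abs_neg, abs_sq]
    linarith

lemma exists_sq_holder_quotient_le {f : ℝ → ℝ} {s t γ : ℝ}
    (hf : ContinuousOn f (Icc s t)) (hst : s < t) (hγ : 0 ≤ γ) :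
    ∃ s' t', s ≤ s' ∧ s' < t' ∧ t' ≤ t ∧
      (|f t - f s| / (t - s) ^ γ) ^ 2 ≤ 4 * (|f t' ^ 2 - f s' ^ 2| / (t' - s') ^ (2 * γ)) := by
  obtain ⟨s', t', hs', hst', ht', hle⟩ := exists_sq_sub_le_four_mul_abs_sq_sub_sq hf hst
  refine ⟨s', t', hs', hst', ht', ?_⟩
  have : 0 < t' - s' := sub_pos.2 hst'
  calc (|f t - f s| / (t - s) ^ γ) ^ 2
      = (f t - f s) ^ 2 / (t - s) ^ (2 * γ) := by
        rw [div_pow, sq_abs, mul_comm, Real.rpow_mul (sub_pos.2 hst).le, Real.rpow_two]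
    _ ≤ 4 * |f t' ^ 2 - f s' ^ 2| / (t' - s') ^ (2 * γ) := by gcongr
    _ = 4 * (|f t' ^ 2 - f s' ^ 2| / (t' - s') ^ (2 * γ)) := mul_div_assoc _ _ _

theorem stmt9_general {Ω : Type*} [MeasurableSpace Ω] (P : Measure Ω) (σ : Ω → ℝ → ℝ)
    (hσmeas : ∀ t ∈ Icc (0 : ℝ) 1, AEMeasurable (fun ω => σ ω t) P)
    (hσcont : ∀ ω, ContinuousOn (σ ω) (Icc 0 1)) (ε γ₀ : ℝ) (hε : 0 < ε) (hγ₀ : 0 < γ₀)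
    (hbound : ∃ C : ℝ≥0∞, C < ⊤ ∧ ∀ s ∈ Icc (0 : ℝ) 1, ∀ t ∈ Icc (0 : ℝ) 1, s ≠ t →
      ∫⁻ ω, ENNReal.ofReal
        (Real.exp (ε * (|σ ω t ^ 2 - σ ω s ^ 2| / |t - s| ^ γ₀))) ∂P ≤ C)
    (γ : ℝ) (hγ : γ ∈ Ico 0 (γ₀ / 2)) :
    ∃ δ > 0, ∫⁻ ω, (⨆ (s : ℝ) (t : ℝ) (_ : 0 ≤ s) (_ : s < t) (_ : t ≤ 1),
      ENNReal.ofReal (Real.exp (δ * (|σ ω t - σ ω s| / (t - s) ^ γ) ^ 2))) ∂P < ⊤ := by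
  obtain ⟨C, hC, hbound⟩ := hbound
  obtain ⟨δ, hδ, hsq⟩ := exists_lintegral_iSup_exp_holder_lt_top (P := P)
    (X := fun ω t => σ ω t ^ 2) (γ := 2 * γ)
    (fun s hs t ht => ((hσmeas t ht).pow_const 2).dist ((hσmeas s hs).pow_const 2))
    (fun ω => (hσcont ω).pow 2) hε hγ₀
    ⟨C, hC, fun s t hs hst ht => by
      simpa only [Real.dist_eq, abs_of_pos (sub_pos.2 hst)] using
        hbound s ⟨hs, hst.le.trans ht⟩ t ⟨hs.trans hst.le, ht⟩ hst.ne⟩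
    (by linarith [hγ.2])
  refine ⟨δ / 4, by positivity, lintegral_iSup_lt_top_of_le_mul ENNReal.one_ne_top
    (fun ω s t hs hst ht => ?_) hsq⟩
  obtain ⟨s', t', hs', hst', ht', hle⟩ := exists_sq_holder_quotient_le
    ((hσcont ω).mono (Icc_subset_Icc hs ht)) hst hγ.1
  refine ⟨s', t', hs.trans hs', hst', ht'.trans ht, ?_⟩
  rw [one_mul, Real.dist_eq]
  gcongr ENNReal.ofReal (Real.exp ?_)
  linarith [mul_le_mul_of_nonneg_left hle hδ.le]

/-- let `σ` be a process on `[0,1]` with continuous nonnegative paths.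
If there are `ε > 0` and `γ₀ > 0` with
`sup_{s ≠ t} E[exp(ε |σ_t² − σ_s²| / |t−s|^{γ₀})] < ∞`, then for every
`γ ∈ [0, γ₀/2)` the pathwise `γ`-Hölder seminorm of `σ` admits all exponential
moments.  (Expressed in `ℝ≥0∞` via the supremum over all pairs `s < t`.) -/
theorem stmt9 {Ω : Type*} [MeasurableSpace Ω] (P : Measure Ω) [IsProbabilityMeasure P]
    (σ : Ω → ℝ → ℝ) (hσmeas : Measurable (Function.uncurry σ))
    (hσcont : ∀ ω, ContinuousOn (σ ω) (Set.Icc 0 1))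
    (hσnonneg : ∀ ω, ∀ t ∈ Set.Icc (0:ℝ) 1, 0 ≤ σ ω t)
    (ε γ₀ : ℝ) (hε : 0 < ε) (hγ₀ : 0 < γ₀)
    (hbound : ∃ C : ℝ≥0∞, C < ⊤ ∧ ∀ s ∈ Set.Icc (0:ℝ) 1, ∀ t ∈ Set.Icc (0:ℝ) 1, s ≠ t →
      (∫⁻ ω, ENNReal.ofReal
        (Real.exp (ε * (|σ ω t ^ 2 - σ ω s ^ 2| / |t - s| ^ γ₀))) ∂P) ≤ C)
    (γ : ℝ) (hγ : γ ∈ Set.Ico (0:ℝ) (γ₀ / 2)) (k : ℝ) (hk : 0 < k) :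
    (∫⁻ ω, (⨆ (s : ℝ) (t : ℝ) (_ : 0 ≤ s) (_ : s < t) (_ : t ≤ 1),
      ENNReal.ofReal (Real.exp (k * (|σ ω t - σ ω s| / (t - s) ^ γ)))) ∂P) < ⊤ := by
  obtain ⟨δ, hδ, hsq⟩ := stmt9_general P σ (fun _ _ => hσmeas.of_uncurry_right.aemeasurable)
    hσcont ε γ₀ hε hγ₀ hbound γ hγ
  exact lintegral_iSup_exp_mul_lt_top_of_sq hδ hsq k
end

section
/- Let α ∈ (1/2, 1), let Γ denote the Gamma function, and let K(t) = t^{α−1}/Γ(α) be the fractional kernel. Then for all 0 ≤ s < t ≤ 1: (i) ∫_s^t K(t−u)² du = (t−s)^{2α−1} / ( (2α−1) Γ(α)² ), and (ii) ∫_0^s ( K(t−u) − K(s−u) )² du ≤ (t−s)^{2α−1} / ( (2α−1) Γ(α)² ). -/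
/-- The `α`-fractional kernel `K(t) = t^{α−1}/Γ(α)`. -/
noncomputable def fracKernel (α t : ℝ) : ℝ := t ^ (α - 1) / Real.Gamma α

/-! Put `h = t - s`. For a nonnegative antitone `K`, `0 ≤ K (x + h) ≤ K x` gives
`(K (x + h) - K x) ^ 2 ≤ K x ^ 2 - K (x + h) ^ 2`, and the right-hand side integrates over `[0, s]`
to the integral of `K ^ 2` over `[0, h]` minus that over `[s, s + h]`. So both claims reduce to the
integral of `K ^ 2` over `[0, h]`, which for the fractional kernel is that of a power. -/

open MeasureTheory Set

theorem sq_sub_le_sq_sub_sq {R : Type*} [CommRing R] [LinearOrder R] [IsStrictOrderedRing R]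
    {a b : R} (ha : 0 ≤ a) (hab : a ≤ b) : (a - b) ^ 2 ≤ b ^ 2 - a ^ 2 := by
  nlinarith [mul_nonneg ha (sub_nonneg.2 hab)]

theorem integral_sq_translate_sub_le {K : ℝ → ℝ} {s h : ℝ} (hK : AntitoneOn K (Ioi 0))
    (hK_nonneg : ∀ x ∈ Ioi 0, 0 ≤ K x) (hs : 0 ≤ s) (hh : 0 ≤ h)
    (hK_sq : IntervalIntegrable (fun x ↦ K x ^ 2) volume 0 (s + h)) :
    ∫ x in 0..s, (K (x + h) - K x) ^ 2 ≤ ∫ x in 0..h, K x ^ 2 := by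
  have hK_sq_s : IntervalIntegrable (fun x ↦ K x ^ 2) volume 0 s :=
    hK_sq.mono_set (uIcc_subset_uIcc_left (mem_uIcc_of_le hs (by linarith)))
  have hK_sq_h : IntervalIntegrable (fun x ↦ K x ^ 2) volume 0 h :=
    hK_sq.mono_set (uIcc_subset_uIcc_left (mem_uIcc_of_le hh (by linarith)))
  have hK_sq_translate : IntervalIntegrable (fun x ↦ K (x + h) ^ 2) volume 0 s := by
    simpa using (hK_sq_h.symm.trans hK_sq).comp_add_right h
  calc
    ∫ x in 0..s, (K (x + h) - K x) ^ 2
    _ ≤ ∫ x in 0..s, (K x ^ 2 - K (x + h) ^ 2) := by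
      rw [intervalIntegral.integral_of_le hs, intervalIntegral.integral_of_le hs]
      refine integral_mono_of_nonneg (ae_of_all _ fun x ↦ sq_nonneg _)
        (hK_sq_s.sub hK_sq_translate).1
        (ae_restrict_of_forall_mem measurableSet_Ioc fun x hx ↦ ?_)
      have hxh : x + h ∈ Ioi 0 := add_pos_of_pos_of_nonneg hx.1 hh
      exact sq_sub_le_sq_sub_sq (hK_nonneg _ hxh) (hK hx.1 hxh (le_add_of_nonneg_right hh))
    _ = (∫ x in 0..s, K x ^ 2) - ∫ x in h..s + h, K x ^ 2 := by
      rw [intervalIntegral.integral_sub hK_sq_s hK_sq_translate,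
        intervalIntegral.integral_comp_add_right (fun x ↦ K x ^ 2), zero_add]
    _ = (∫ x in 0..h, K x ^ 2) - ∫ x in s..s + h, K x ^ 2 :=
      intervalIntegral.integral_interval_sub_interval_comm hK_sq_s
        (hK_sq_h.symm.trans hK_sq) hK_sq_h
    _ ≤ ∫ x in 0..h, K x ^ 2 :=
      sub_le_self _ (intervalIntegral.integral_nonneg (by linarith) fun x _ ↦ sq_nonneg _)

section FracKernel

variable {α x : ℝ}

theorem fracKernel_nonneg (hα : 0 ≤ α) (hx : 0 ≤ x) : 0 ≤ fracKernel α x :=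
  div_nonneg (Real.rpow_nonneg hx _) (Real.Gamma_nonneg_of_nonneg hα)

theorem antitoneOn_fracKernel (hα₀ : 0 ≤ α) (hα₁ : α ≤ 1) : AntitoneOn (fracKernel α) (Ioi 0) :=
  fun _ hx _ _ hxy ↦ div_le_div_of_nonneg_right
    (Real.rpow_le_rpow_of_nonpos hx hxy (sub_nonpos.2 hα₁)) (Real.Gamma_nonneg_of_nonneg hα₀)

theorem sq_fracKernel (hx : 0 ≤ x) :
    fracKernel α x ^ 2 = x ^ (2 * (α - 1)) / Real.Gamma α ^ 2 := by
  rw [fracKernel, div_pow, mul_comm, ← Real.rpow_mul_natCast hx, Nat.cast_ofNat]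

theorem intervalIntegrable_sq_fracKernel (hα : 1 / 2 < α) (hx : 0 ≤ x) :
    IntervalIntegrable (fun y ↦ fracKernel α y ^ 2) volume 0 x := by
  have h_rpow : IntervalIntegrable (fun y : ℝ ↦ y ^ (2 * (α - 1))) volume 0 x :=
    intervalIntegral.intervalIntegrable_rpow' (by linarith)
  refine (h_rpow.div_const (Real.Gamma α ^ 2)).congr fun y hy ↦ ?_
  rw [uIoc_of_le hx] at hy
  exact (sq_fracKernel hy.1.le).symm

theorem integral_sq_fracKernel (hα : 1 / 2 < α) (hx : 0 ≤ x) :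
    ∫ y in 0..x, fracKernel α y ^ 2 =
      x ^ (2 * α - 1) / ((2 * α - 1) * Real.Gamma α ^ 2) := by
  have h_exp : 2 * (α - 1) + 1 = 2 * α - 1 := by ring
  calc
    ∫ y in 0..x, fracKernel α y ^ 2
    _ = ∫ y in 0..x, y ^ (2 * (α - 1)) / Real.Gamma α ^ 2 := by
      refine intervalIntegral.integral_congr fun y hy ↦ sq_fracKernel ?_
      rw [uIcc_of_le hx] at hy
      exact hy.1
    _ = x ^ (2 * α - 1) / ((2 * α - 1) * Real.Gamma α ^ 2) := by
      rw [intervalIntegral.integral_div, integral_rpow (Or.inl (by linarith)), h_exp,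
        Real.zero_rpow (by linarith), sub_zero, div_div]

end FracKernel

theorem stmt13_general {α s t : ℝ} (hα : α ∈ Ioc (1 / 2 : ℝ) 1) (hs : 0 ≤ s) (hst : s ≤ t) :
    (∫ u in s..t, fracKernel α (t - u) ^ 2) =
      (t - s) ^ (2 * α - 1) / ((2 * α - 1) * Real.Gamma α ^ 2) ∧
    (∫ u in 0..s, (fracKernel α (t - u) - fracKernel α (s - u)) ^ 2) ≤
      (t - s) ^ (2 * α - 1) / ((2 * α - 1) * Real.Gamma α ^ 2) := by
  obtain ⟨hα_half, hα_one⟩ := hα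
  have hα_nonneg : 0 ≤ α := by linarith
  have hts : 0 ≤ t - s := sub_nonneg.2 hst
  rw [← integral_sq_fracKernel hα_half hts]
  constructor
  · rw [intervalIntegral.integral_comp_sub_left (fun x ↦ fracKernel α x ^ 2), sub_self]
  · calc
      ∫ u in 0..s, (fracKernel α (t - u) - fracKernel α (s - u)) ^ 2
      _ = ∫ x in 0..s, (fracKernel α (x + (t - s)) - fracKernel α x) ^ 2 := by
        simpa using intervalIntegral.integral_comp_sub_left (a := 0) (b := s)
          (fun x ↦ (fracKernel α (x + (t - s)) - fracKernel α x) ^ 2) s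
      _ ≤ ∫ x in 0..t - s, fracKernel α x ^ 2 :=
        integral_sq_translate_sub_le (antitoneOn_fracKernel hα_nonneg hα_one)
          (fun _ hx ↦ fracKernel_nonneg hα_nonneg (le_of_lt hx)) hs hts
          (intervalIntegrable_sq_fracKernel hα_half (add_nonneg hs hts))

/-- for `α ∈ (1/2,1)` and `0 ≤ s < t ≤ 1`:
(i) `∫_s^t K(t−u)² du = (t−s)^{2α−1}/((2α−1) Γ(α)²)`, and
(ii) `∫_0^s (K(t−u) − K(s−u))² du ≤ (t−s)^{2α−1}/((2α−1) Γ(α)²)`. -/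
theorem stmt13 (α : ℝ) (hα : α ∈ Set.Ioo (1/2 : ℝ) 1)
    (s t : ℝ) (hs : 0 ≤ s) (hst : s < t) (ht : t ≤ 1) :
    (∫ u in s..t, (fracKernel α (t - u)) ^ 2) =
      (t - s) ^ (2 * α - 1) / ((2 * α - 1) * Real.Gamma α ^ 2) ∧
    (∫ u in (0:ℝ)..s, (fracKernel α (t - u) - fracKernel α (s - u)) ^ 2) ≤
      (t - s) ^ (2 * α - 1) / ((2 * α - 1) * Real.Gamma α ^ 2) :=
  stmt13_general ⟨hα.1, hα.2.le⟩ hs hst.le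
end

section
/- Let a, k, η > 0 satisfy the Feller condition 2a ≥ η², and define F(t,u) = ( 1 − (η²/(2k)) (1 − e^{−kt}) u )^{-1}. Then there exist constants ε₀ > 0 and C > 0, depending only on a, k, η, such that the following holds: for every x ≥ 0, every t ∈ (0,1], every ε ∈ (0, ε₀], and every nonnegative random variable V whose moment generating function satisfies E[ e^{uV} ] = F(t,u)^{2a/η²} exp( u e^{−kt} F(t,u) x ) for all u < 2k η^{-2} (1 − e^{−k})^{-1}, one has E[ exp( ε |V − x| / √t ) ] ≤ C exp( C ε x ). -/
open MeasureTheory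
open scoped ENNReal

/-!
The function `F ^ p * exp (b u F)`, with `F = (1 - c u)⁻¹`, is holomorphic for `|c u| < 1`. If it is
the moment generating function of `V` near `0`, then its even Taylor coefficients at `0` are the
numbers `E[V ^ (2n)] / (2n)!`, so the convergence of its Taylor series yields the integrability of
`cosh (u V)` for all `|c u| < 1`, and the formula persists there by the identity theorem.
At `u = ± ε / √t` we have `c u² = O(ε)` and `u t = O(ε)`, hence `F = 1 + O(c u)`,
`u (b F - x) = O(ε x)`, and `exp |y| ≤ exp y + exp (-y)` concludes.
-/

open Filter Topology ProbabilityTheory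

section Extension

variable {Ω : Type*} [MeasurableSpace Ω] {μ : Measure Ω}

lemma integrable_of_hasSum_of_summable_integral_norm {ι E : Type*} [Countable ι]
    [NormedAddCommGroup E] {F : ι → Ω → E} {g : Ω → E} (hF : ∀ i, Integrable (F i) μ)
    (hsum : Summable fun i ↦ ∫ ω, ‖F i ω‖ ∂μ) (hg : ∀ ω, HasSum (F · ω) (g ω)) :
    Integrable g μ := by
  refine ⟨aestronglyMeasurable_of_tendsto_ae atTop
    (fun s ↦ (integrable_finsetSum s fun i _ ↦ hF i).aestronglyMeasurable)
    (.of_forall hg), ?_⟩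
  calc ∫⁻ ω, ‖g ω‖ₑ ∂μ
    _ ≤ ∫⁻ ω, ∑' i, ‖F i ω‖ₑ ∂μ :=
      lintegral_mono fun ω ↦ (hg ω).tsum_eq ▸ enorm_tsum_le_tsum_enorm
    _ = ∑' i, ENNReal.ofReal (∫ ω, ‖F i ω‖ ∂μ) := by
      rw [lintegral_tsum fun i ↦ (hF i).aestronglyMeasurable.enorm]
      simp_rw [ofReal_integral_norm_eq_lintegral_enorm (hF _)]
    _ < ∞ := hsum.tsum_ofReal_lt_top

variable {X : Ω → ℝ}

lemma mem_interior_integrableExpSet_of_eventually_mgf_ne_zero {v : ℝ}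
    (h : ∀ᶠ u in 𝓝 v, mgf X μ u ≠ 0) : v ∈ interior (integrableExpSet X μ) :=
  mem_interior_iff_mem_nhds.2 <| h.mono fun _ hu ↦ not_imp_comm.1 mgf_undef hu

lemma integrable_exp_mul_of_integrable_cosh_mul (hX : AEMeasurable X μ) {u : ℝ}
    (h : Integrable (fun ω ↦ Real.cosh (u * X ω)) μ) :
    Integrable (fun ω ↦ Real.exp (u * X ω)) μ := by
  refine (h.const_mul 2).mono' (by fun_prop) (.of_forall fun ω ↦ ?_)
  rw [Real.norm_of_nonneg (Real.exp_pos _).le, Real.cosh_eq]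
  linarith [Real.exp_pos (-(u * X ω))]

lemma lintegral_exp_mul_abs_sub_le {u : ℝ} (hu : 0 ≤ u) (x : ℝ)
    (hpos : Integrable (fun ω ↦ Real.exp (u * X ω)) μ)
    (hneg : Integrable (fun ω ↦ Real.exp (-u * X ω)) μ) :
    ∫⁻ ω, ENNReal.ofReal (Real.exp (u * |X ω - x|)) ∂μ ≤
      ENNReal.ofReal (Real.exp (-(u * x)) * mgf X μ u + Real.exp (-(-u * x)) * mgf X μ (-u)) := by
  have hbound (ω : Ω) : Real.exp (u * |X ω - x|) ≤
      Real.exp (-(u * x)) * Real.exp (u * X ω) + Real.exp (-(-u * x)) * Real.exp (-u * X ω) := by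
    calc Real.exp (u * |X ω - x|)
      _ = Real.exp |u * (X ω - x)| := by rw [abs_mul, abs_of_nonneg hu]
      _ ≤ Real.exp (u * (X ω - x)) + Real.exp (-(u * (X ω - x))) := Real.exp_abs_le _
      _ = _ := by rw [← Real.exp_add, ← Real.exp_add]; ring_nf
  refine (lintegral_mono fun ω ↦ ENNReal.ofReal_le_ofReal (hbound ω)).trans_eq ?_
  have hpos' := hpos.const_mul (Real.exp (-(u * x)))
  have hneg' := hneg.const_mul (Real.exp (-(-u * x)))
  rw [mgf, mgf, ← integral_const_mul, ← integral_const_mul, ← integral_add hpos' hneg']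
  exact (ofReal_integral_eq_lintegral_ofReal (hpos'.add hneg')
    (.of_forall fun ω ↦ by simp only [Pi.add_apply, Pi.zero_apply]; positivity)).symm

variable {f : ℂ → ℂ}

lemma complexMGF_eventuallyEq_of_mgf {v : ℝ} (hv : v ∈ interior (integrableExpSet X μ))
    (hf : AnalyticAt ℂ f v) (h : ∀ᶠ u : ℝ in 𝓝 v, (mgf X μ u : ℂ) = f u) :
    complexMGF X μ =ᶠ[𝓝 (v : ℂ)] f := by
  refine ((analyticAt_complexMGF hv).frequently_eq_iff_eventually_eq hf).1 ?_
  have hofReal : Tendsto ((↑) : ℝ → ℂ) (𝓝[≠] v) (𝓝[≠] v) :=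
    Complex.continuous_ofReal.continuousWithinAt.tendsto_nhdsWithin fun u hu ↦ by simpa using hu
  refine hofReal.frequently (Eventually.frequently (nhdsWithin_le_nhds ?_))
  filter_upwards [h] with u hu
  rw [complexMGF_ofReal, hu]

variable {R : ℝ} (h0 : 0 ∈ interior (integrableExpSet X μ))
  (hf : DifferentiableOn ℂ f (Metric.ball 0 R)) (hXf : complexMGF X μ =ᶠ[𝓝 0] f)

include h0 hf hXf

lemma summable_integral_mul_pow_div_factorial {u : ℝ} (hu : |u| < R) :
    Summable fun n : ℕ ↦ ∫ ω, (u * X ω) ^ n / n.factorial ∂μ := by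
  have hu' : (u : ℂ) ∈ Metric.ball 0 R := by simpa using hu
  have hmoment (n : ℕ) : iteratedDeriv n f 0 = ((∫ ω, X ω ^ n ∂μ : ℝ) : ℂ) := by
    rw [← hXf.iteratedDeriv_eq n, iteratedDeriv_complexMGF (by simpa using h0),
      ← integral_complex_ofReal]
    simp
  rw [← Complex.summable_ofReal]
  refine (Complex.hasSum_taylorSeries_on_ball hf hu').summable.congr fun n ↦ ?_
  simp_rw [hmoment, mul_pow, mul_div_right_comm, integral_const_mul]
  push_cast
  simp only [sub_zero, smul_eq_mul]
  ring

lemma integrable_cosh_mul_of_complexMGF_eventuallyEq {u : ℝ} (hu : |u| < R) :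
    Integrable (fun ω ↦ Real.cosh (u * X ω)) μ := by
  refine integrable_of_hasSum_of_summable_integral_norm
    (F := fun (n : ℕ) ω ↦ (u * X ω) ^ (2 * n) / (2 * n).factorial) (fun n ↦ ?_) ?_
    (fun ω ↦ Real.hasSum_cosh _)
  · simp_rw [mul_pow]
    exact ((integrable_pow_of_mem_interior_integrableExpSet h0 _).const_mul _).div_const _
  · have hnorm (n : ℕ) (ω : Ω) : ‖(u * X ω) ^ (2 * n) / (2 * n).factorial‖ =
        (u * X ω) ^ (2 * n) / (2 * n).factorial :=
      Real.norm_of_nonneg (div_nonneg ((even_two_mul n).pow_nonneg _) (Nat.cast_nonneg _))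
    simp_rw [hnorm]
    exact (summable_integral_mul_pow_div_factorial h0 hf hXf hu).comp_injective
      (mul_right_injective₀ two_ne_zero)

lemma Ioo_subset_integrableExpSet_of_complexMGF_eventuallyEq :
    Set.Ioo (-R) R ⊆ integrableExpSet X μ := fun _ hu ↦
  integrable_exp_mul_of_integrable_cosh_mul (aemeasurable_of_mem_interior_integrableExpSet h0)
    (integrable_cosh_mul_of_complexMGF_eventuallyEq h0 hf hXf (abs_lt.2 hu))

lemma eqOn_ball_complexMGF : Set.EqOn (complexMGF X μ) f (Metric.ball 0 R) := by
  intro z hz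
  have hstrip (w : ℂ) (hw : w ∈ Metric.ball 0 R) : w.re ∈ interior (integrableExpSet X μ) :=
    interior_maximal (Ioo_subset_integrableExpSet_of_complexMGF_eventuallyEq h0 hf hXf) isOpen_Ioo
      (abs_lt.1 <| (Complex.abs_re_le_norm w).trans_lt (mem_ball_zero_iff.1 hw))
  exact (analyticOnNhd_complexMGF.mono hstrip).eqOn_of_preconnected_of_eventuallyEq
    (hf.analyticOnNhd Metric.isOpen_ball) (convex_ball 0 R).isPreconnected
    (Metric.mem_ball_self (Metric.pos_of_mem_ball hz)) hXf hz

end Extension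

section NoncentralGamma

/-- The moment generating function of the noncentral gamma law with shape `p`, scale `c` and
noncentrality `b / c`. For suitable `c` and `b` depending on `t`, it is that of the CIR process
at time `t`. -/
noncomputable def noncentralGammaMGF (p c b u : ℝ) : ℝ :=
  (1 - c * u)⁻¹ ^ p * Real.exp (b * u * (1 - c * u)⁻¹)

/-- The holomorphic extension of `noncentralGammaMGF p c b`. The power is taken of `1 - c * z`, not
of its inverse, so that the branch cut is that of the standard logarithm in `1 - c * z`. -/
noncomputable def noncentralGammaComplexMGF (p c b : ℝ) (z : ℂ) : ℂ :=
  (1 - c * z) ^ (-p : ℂ) * Complex.exp (b * z * (1 - c * z)⁻¹)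

variable {p c b u R : ℝ}

lemma ofReal_noncentralGammaMGF (h : c * u < 1) :
    (noncentralGammaMGF p c b u : ℂ) = noncentralGammaComplexMGF p c b u := by
  have hpos : 0 ≤ 1 - c * u := sub_nonneg.2 h.le
  rw [noncentralGammaMGF, noncentralGammaComplexMGF, Real.inv_rpow hpos, ← Real.rpow_neg hpos]
  push_cast [Complex.ofReal_cpow hpos]
  rfl

lemma noncentralGammaMGF_pos (h : c * u < 1) : 0 < noncentralGammaMGF p c b u :=
  mul_pos (Real.rpow_pos_of_pos (inv_pos.2 (sub_pos.2 h)) p) (Real.exp_pos _)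

lemma eventually_mul_lt_one (c : ℝ) : ∀ᶠ u in 𝓝 (0 : ℝ), c * u < 1 :=
  (continuous_const_mul c).continuousAt.eventually_lt continuousAt_const (by simp)

lemma mul_lt_one_of_mul_le_one {r s : ℝ} (hr : 0 ≤ r) (hrR : r * R ≤ 1) (hs : s < R) :
    r * s < 1 := by
  obtain rfl | hr := hr.eq_or_lt
  · simp
  · exact (mul_lt_mul_of_pos_left hs hr).trans_le hrR

lemma differentiableOn_noncentralGammaComplexMGF (hR : |c| * R ≤ 1) :
    DifferentiableOn ℂ (noncentralGammaComplexMGF p c b) (Metric.ball 0 R) := by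
  intro z hz
  have hcz : ‖-(c * z)‖ < 1 := by
    rw [norm_neg, norm_mul, Complex.norm_real, Real.norm_eq_abs]
    exact mul_lt_one_of_mul_le_one (abs_nonneg c) hR (mem_ball_zero_iff.1 hz)
  have hslit : 1 - c * z ∈ Complex.slitPlane :=
    sub_eq_add_neg (1 : ℂ) _ ▸ Complex.mem_slitPlane_of_norm_lt_one hcz
  have hsub : DifferentiableAt ℂ (fun z : ℂ ↦ 1 - c * z) z := by fun_prop
  have hinv : DifferentiableAt ℂ (fun z : ℂ ↦ (1 - c * z)⁻¹) z :=
    hsub.inv (Complex.slitPlane_ne_zero hslit)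
  exact ((hsub.cpow_const hslit).mul (by fun_prop)).differentiableWithinAt

lemma inv_one_sub_le_two {y : ℝ} (hy : |y| ≤ 1 / 2) : (1 - y)⁻¹ ≤ 2 :=
  inv_le_of_inv_le₀ two_pos (by linarith [le_abs_self y])

lemma abs_inv_one_sub_sub_one_le {y : ℝ} (hy : |y| ≤ 1 / 2) : |(1 - y)⁻¹ - 1| ≤ 2 * |y| := by
  have hpos : 0 < 1 - y := by linarith [le_abs_self y]
  calc |(1 - y)⁻¹ - 1|
    _ = (1 - y)⁻¹ * |y| := by
      rw [← abs_of_pos (inv_pos.2 hpos), ← abs_mul, abs_of_pos (inv_pos.2 hpos)]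
      congr 1
      field_simp
      ring
    _ ≤ 2 * |y| := by gcongr; exact inv_one_sub_le_two hy

lemma exp_neg_mul_mul_noncentralGammaMGF_le (hp : 0 ≤ p) (hcu : |c * u| ≤ 1 / 2) (b x : ℝ) :
    Real.exp (-(u * x)) * noncentralGammaMGF p c b u ≤
      2 ^ p * Real.exp (|u| * (2 * |c * u| * |b| + |b - x|)) := by
  have hpos : 0 < 1 - c * u := by linarith [le_abs_self (c * u)]
  have hexponent : u * (b * ((1 - c * u)⁻¹ - 1) + (b - x)) ≤
      |u| * (2 * |c * u| * |b| + |b - x|) := by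
    calc u * (b * ((1 - c * u)⁻¹ - 1) + (b - x))
      _ ≤ |u| * |b * ((1 - c * u)⁻¹ - 1) + (b - x)| := (le_abs_self _).trans_eq (abs_mul _ _)
      _ ≤ |u| * (|b| * |(1 - c * u)⁻¹ - 1| + |b - x|) := by
        gcongr
        exact (abs_add_le _ _).trans_eq (by rw [abs_mul])
      _ ≤ |u| * (|b| * (2 * |c * u|) + |b - x|) := by
        gcongr
        exact abs_inv_one_sub_sub_one_le hcu
      _ = |u| * (2 * |c * u| * |b| + |b - x|) := by ring
  calc Real.exp (-(u * x)) * noncentralGammaMGF p c b u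
    _ = (1 - c * u)⁻¹ ^ p * Real.exp (u * (b * ((1 - c * u)⁻¹ - 1) + (b - x))) := by
      rw [noncentralGammaMGF, mul_left_comm, ← Real.exp_add]
      ring_nf
    _ ≤ 2 ^ p * Real.exp (|u| * (2 * |c * u| * |b| + |b - x|)) := by
      gcongr
      exact inv_one_sub_le_two hcu

section Law

variable {Ω : Type*} [MeasurableSpace Ω] {μ : Measure Ω} {X : Ω → ℝ}
  (h : mgf X μ =ᶠ[𝓝 0] noncentralGammaMGF p c b)

include h

lemma zero_mem_interior_integrableExpSet_of_noncentralGammaMGF :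
    0 ∈ interior (integrableExpSet X μ) := by
  refine mem_interior_integrableExpSet_of_eventually_mgf_ne_zero ?_
  filter_upwards [h, eventually_mul_lt_one c] with u hu hcu
  exact hu ▸ (noncentralGammaMGF_pos hcu).ne'

lemma complexMGF_eventuallyEq_noncentralGammaComplexMGF :
    complexMGF X μ =ᶠ[𝓝 0] noncentralGammaComplexMGF p c b := by
  have hR : |c| * (|c| + 1)⁻¹ ≤ 1 := by
    rw [← div_eq_mul_inv]
    exact div_le_one_of_le₀ (by linarith) (by positivity)
  have hanalytic : AnalyticAt ℂ (noncentralGammaComplexMGF p c b) (0 : ℝ) :=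
    (differentiableOn_noncentralGammaComplexMGF hR).analyticAt
      (by simpa using Metric.ball_mem_nhds _ (by positivity))
  rw [← Complex.ofReal_zero]
  refine complexMGF_eventuallyEq_of_mgf
    (zero_mem_interior_integrableExpSet_of_noncentralGammaMGF h) hanalytic ?_
  filter_upwards [h, eventually_mul_lt_one c] with u hu hcu
  rw [hu, ofReal_noncentralGammaMGF hcu]

lemma integrable_exp_mul_of_noncentralGammaMGF (hR : |c| * R ≤ 1) (hu : |u| < R) :
    Integrable (fun ω ↦ Real.exp (u * X ω)) μ :=
  Ioo_subset_integrableExpSet_of_complexMGF_eventuallyEq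
    (zero_mem_interior_integrableExpSet_of_noncentralGammaMGF h)
    (differentiableOn_noncentralGammaComplexMGF hR)
    (complexMGF_eventuallyEq_noncentralGammaComplexMGF h) (abs_lt.1 hu)

lemma mgf_eq_noncentralGammaMGF (hR : |c| * R ≤ 1) (hu : |u| < R) :
    mgf X μ u = noncentralGammaMGF p c b u := by
  have hcu : c * u < 1 := (le_abs_self _).trans_lt <|
    abs_mul c u ▸ mul_lt_one_of_mul_le_one (abs_nonneg c) hR hu
  rw [← Complex.ofReal_inj, ofReal_noncentralGammaMGF hcu, ← complexMGF_ofReal]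
  exact eqOn_ball_complexMGF (zero_mem_interior_integrableExpSet_of_noncentralGammaMGF h)
    (differentiableOn_noncentralGammaComplexMGF hR)
    (complexMGF_eventuallyEq_noncentralGammaComplexMGF h) (by simpa using hu)

lemma lintegral_exp_mul_abs_sub_le_of_noncentralGammaMGF (hp : 0 ≤ p) (hu : 0 < u)
    (hcu : |c * u| ≤ 1 / 2) (x : ℝ) :
    ∫⁻ ω, ENNReal.ofReal (Real.exp (u * |X ω - x|)) ∂μ ≤
      ENNReal.ofReal (2 * 2 ^ p * Real.exp (u * (2 * |c * u| * |b| + |b - x|))) := by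
  have hR : |c| * (2 * u) ≤ 1 := by
    rw [abs_mul, abs_of_pos hu] at hcu
    linarith
  have hu_lt : |u| < 2 * u := by rw [abs_of_pos hu]; linarith
  have hneg_lt : |-u| < 2 * u := by rwa [abs_neg]
  have hbound_pos := exp_neg_mul_mul_noncentralGammaMGF_le hp hcu b x
  have hbound_neg := exp_neg_mul_mul_noncentralGammaMGF_le (u := -u) hp (by simpa using hcu) b x
  simp only [mul_neg c, abs_neg, abs_of_pos hu] at hbound_pos hbound_neg
  refine (lintegral_exp_mul_abs_sub_le hu.le x
    (integrable_exp_mul_of_noncentralGammaMGF h hR hu_lt)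
    (integrable_exp_mul_of_noncentralGammaMGF h hR hneg_lt)).trans (ENNReal.ofReal_le_ofReal ?_)
  rw [mgf_eq_noncentralGammaMGF h hR hu_lt, mgf_eq_noncentralGammaMGF h hR hneg_lt]
  linarith

end Law

end NoncentralGamma

section CIR

/-- The scale parameter of the noncentral gamma law of the CIR process at time `t`. -/
noncomputable def cirScale (k η t : ℝ) : ℝ :=
  η ^ 2 / (2 * k) * (1 - Real.exp (-k * t))

lemma abs_exp_sub_one_le_abs_mul_exp_abs (y : ℝ) : |Real.exp y - 1| ≤ |y| * Real.exp |y| := by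
  have h := Complex.norm_exp_sub_sum_le_norm_mul_exp (y : ℂ) 1
  simp only [Finset.sum_range_one, pow_zero, pow_one, Nat.factorial_zero, Nat.cast_one,
    div_one] at h
  exact_mod_cast h

variable {t : ℝ}

lemma neg_mul_le_abs (k : ℝ) (ht : t ∈ Set.Icc (0 : ℝ) 1) : -k * t ≤ |k| :=
  calc -k * t
    _ ≤ |k| * t := mul_le_mul_of_nonneg_right (neg_le_abs k) ht.1
    _ ≤ |k| := mul_le_of_le_one_right (abs_nonneg k) ht.2

lemma abs_exp_neg_mul_sub_one_le (k : ℝ) (ht : t ∈ Set.Icc (0 : ℝ) 1) :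
    |Real.exp (-k * t) - 1| ≤ |k| * Real.exp |k| * t := by
  have habs : |-k * t| = |k| * t := by rw [abs_mul, abs_neg, abs_of_nonneg ht.1]
  calc |Real.exp (-k * t) - 1|
    _ ≤ |k| * t * Real.exp (|k| * t) := habs ▸ abs_exp_sub_one_le_abs_mul_exp_abs (-k * t)
    _ ≤ |k| * t * Real.exp |k| := by
      have := ht.1
      gcongr
      exact mul_le_of_le_one_right (abs_nonneg k) ht.2
    _ = |k| * Real.exp |k| * t := by ring

lemma abs_cirScale_le {k : ℝ} (hk : k ≠ 0) (η : ℝ) (ht : t ∈ Set.Icc (0 : ℝ) 1) :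
    |cirScale k η t| ≤ η ^ 2 * Real.exp |k| * t / 2 := by
  calc |cirScale k η t|
    _ = η ^ 2 / (2 * |k|) * |Real.exp (-k * t) - 1| := by
      rw [cirScale, abs_mul, abs_sub_comm, abs_div, abs_mul, abs_two, abs_sq]
    _ ≤ η ^ 2 / (2 * |k|) * (|k| * Real.exp |k| * t) := by
      gcongr
      exact abs_exp_neg_mul_sub_one_le k ht
    _ = η ^ 2 * Real.exp |k| * t / 2 := by
      have := abs_pos.2 hk
      field_simp

variable {k η ε x : ℝ} (hk : k ≠ 0) (ht : t ∈ Set.Ioc (0 : ℝ) 1) (hε : 0 ≤ ε)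
  (hε' : η ^ 2 * Real.exp |k| * ε ≤ 1)

include hk ht hε

lemma abs_cirScale_mul_div_sqrt_le :
    |cirScale k η t * (ε / √t)| ≤ η ^ 2 * Real.exp |k| * ε * √t / 2 := by
  have hsqrt : 0 < √t := Real.sqrt_pos.2 ht.1
  rw [abs_mul, abs_of_nonneg (div_nonneg hε hsqrt.le)]
  calc |cirScale k η t| * (ε / √t)
    _ ≤ η ^ 2 * Real.exp |k| * t / 2 * (ε / √t) := by
      gcongr
      exact abs_cirScale_le hk η (Set.Ioc_subset_Icc_self ht)
    _ = η ^ 2 * Real.exp |k| * ε * √t / 2 := by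
      nth_rewrite 1 [← Real.mul_self_sqrt ht.1.le]
      field_simp

include hε'

lemma abs_cirScale_mul_div_sqrt_le_half : |cirScale k η t * (ε / √t)| ≤ 1 / 2 := by
  calc |cirScale k η t * (ε / √t)|
    _ ≤ η ^ 2 * Real.exp |k| * ε * √t / 2 := abs_cirScale_mul_div_sqrt_le hk ht hε
    _ ≤ 1 * 1 / 2 := by gcongr; exact Real.sqrt_le_one.2 ht.2
    _ = 1 / 2 := by norm_num

lemma cir_exponent_le (hx : 0 ≤ x) :
    ε / √t * (2 * |cirScale k η t * (ε / √t)| * |Real.exp (-k * t) * x| +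
        |Real.exp (-k * t) * x - x|) ≤
      (1 + |k|) * Real.exp |k| * ε * x := by
  have hsqrt : 0 < √t := Real.sqrt_pos.2 ht.1
  have hsqrt_le : √t ≤ 1 := Real.sqrt_le_one.2 ht.2
  have ht' := Set.Ioc_subset_Icc_self ht
  have hscale : 2 * |cirScale k η t * (ε / √t)| ≤ √t := by
    calc 2 * |cirScale k η t * (ε / √t)|
      _ ≤ 2 * (η ^ 2 * Real.exp |k| * ε * √t / 2) := by
        gcongr
        exact abs_cirScale_mul_div_sqrt_le hk ht hε
      _ = η ^ 2 * Real.exp |k| * ε * √t := by ring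
      _ ≤ √t := mul_le_of_le_one_left hsqrt.le hε'
  have hmean : |Real.exp (-k * t) * x| ≤ Real.exp |k| * x := by
    rw [abs_of_nonneg (by positivity)]
    gcongr
    exact neg_mul_le_abs k ht'
  have hdrift : |Real.exp (-k * t) * x - x| ≤ √t * (|k| * Real.exp |k| * x) := by
    calc |Real.exp (-k * t) * x - x|
      _ = |Real.exp (-k * t) - 1| * x := by rw [← sub_one_mul, abs_mul, abs_of_nonneg hx]
      _ ≤ |k| * Real.exp |k| * t * x := by gcongr; exact abs_exp_neg_mul_sub_one_le k ht'
      _ = √t * (√t * (|k| * Real.exp |k| * x)) := by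
        nth_rewrite 1 [← Real.mul_self_sqrt ht.1.le]
        ring
      _ ≤ √t * (|k| * Real.exp |k| * x) := by
        exact mul_le_mul_of_nonneg_left (mul_le_of_le_one_left (by positivity) hsqrt_le) hsqrt.le
  calc ε / √t * (2 * |cirScale k η t * (ε / √t)| * |Real.exp (-k * t) * x| +
        |Real.exp (-k * t) * x - x|)
    _ ≤ ε / √t * (√t * (Real.exp |k| * x) + √t * (|k| * Real.exp |k| * x)) := by gcongr
    _ = (1 + |k|) * Real.exp |k| * ε * x := by field_simp

end CIR

theorem stmt17_general.{u} (a k η : ℝ) (ha : 0 ≤ a) (hk : k ≠ 0) (hη : 0 < η)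
    (F : ℝ → ℝ → ℝ)
    (hF : ∀ t u, F t u = (1 - η ^ 2 / (2 * k) * (1 - Real.exp (-k * t)) * u)⁻¹) :
    ∃ ε₀ > (0 : ℝ), ∃ C > (0 : ℝ),
      ∀ (Ω : Type u) (_ : MeasurableSpace Ω) (P : Measure Ω) (V : Ω → ℝ),
        ∀ x, 0 ≤ x → ∀ t ∈ Set.Ioc (0 : ℝ) 1,
        (∀ᶠ u in 𝓝 (0 : ℝ), (∫ ω, Real.exp (u * V ω) ∂P) =
          (F t u) ^ (2 * a / η ^ 2) * Real.exp (u * Real.exp (-k * t) * F t u * x)) →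
        ∀ ε ∈ Set.Ioc (0 : ℝ) ε₀,
          (∫⁻ ω, ENNReal.ofReal (Real.exp (ε * |V ω - x| / Real.sqrt t)) ∂P) ≤
            ENNReal.ofReal (C * Real.exp (C * ε * x)) := by
  set p := 2 * a / η ^ 2
  set K := (1 + |k|) * Real.exp |k|
  have hp : 0 ≤ p := by positivity
  refine ⟨(η ^ 2 * Real.exp |k|)⁻¹, by positivity, 2 * 2 ^ p + K, by positivity, ?_⟩
  intro Ω _ P V x hx t ht hV ε ⟨hε, hε_le⟩
  have hηε : η ^ 2 * Real.exp |k| * ε ≤ 1 := by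
    rwa [← le_inv_mul_iff₀ (by positivity), mul_one]
  have hmgf : mgf V P =ᶠ[𝓝 0] noncentralGammaMGF p (cirScale k η t) (Real.exp (-k * t) * x) := by
    filter_upwards [hV] with u hu
    rw [mgf, hu, hF, noncentralGammaMGF, cirScale]
    ring_nf
  calc ∫⁻ ω, ENNReal.ofReal (Real.exp (ε * |V ω - x| / √t)) ∂P
    _ = ∫⁻ ω, ENNReal.ofReal (Real.exp (ε / √t * |V ω - x|)) ∂P := by
      simp_rw [mul_div_right_comm]
    _ ≤ _ := lintegral_exp_mul_abs_sub_le_of_noncentralGammaMGF hmgf hp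
      (div_pos hε (Real.sqrt_pos.2 ht.1)) (abs_cirScale_mul_div_sqrt_le_half hk ht hε.le hηε) x
    _ ≤ ENNReal.ofReal ((2 * 2 ^ p + K) * Real.exp ((2 * 2 ^ p + K) * ε * x)) := by
      have hexponent := cir_exponent_le hk ht hε.le hηε hx
      refine ENNReal.ofReal_le_ofReal (mul_le_mul (le_add_of_nonneg_right (by positivity))
        (Real.exp_le_exp.2 (hexponent.trans ?_)) (Real.exp_pos _).le (by positivity))
      gcongr
      exact le_add_of_nonneg_left (by positivity)

/-- let `a, k, η > 0` satisfy the Feller condition `2a ≥ η²` and let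
`F(t,u) = (1 − (η²/(2k))(1 − e^{−kt}) u)⁻¹`.  Then there are constants `ε₀ > 0` and
`C > 0`, depending only on `a, k, η`, such that for every `x ≥ 0`, `t ∈ (0,1]`,
`ε ∈ (0,ε₀]`, and every nonnegative random variable `V` whose moment generating
function is that of the CIR process at time `t` started at `x`, one has
`E[exp(ε |V − x|/√t)] ≤ C exp(C ε x)`. -/
theorem stmt17 (a k η : ℝ) (ha : 0 < a) (hk : 0 < k) (hη : 0 < η)
    (hFeller : η ^ 2 ≤ 2 * a)
    (F : ℝ → ℝ → ℝ)
    (hF : ∀ t u, F t u = (1 - η ^ 2 / (2 * k) * (1 - Real.exp (-k * t)) * u)⁻¹) :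
    ∃ ε₀ > (0:ℝ), ∃ C > (0:ℝ),
      ∀ (Ω : Type) (_ : MeasurableSpace Ω) (P : Measure Ω), IsProbabilityMeasure P →
        ∀ (V : Ω → ℝ), Measurable V → (∀ ω, 0 ≤ V ω) →
        ∀ x, 0 ≤ x → ∀ t ∈ Set.Ioc (0:ℝ) 1,
        (∀ u : ℝ, u < 2 * k * (η ^ 2)⁻¹ * (1 - Real.exp (-k))⁻¹ →
          (∫ ω, Real.exp (u * V ω) ∂P) =
            (F t u) ^ (2 * a / η ^ 2) *
              Real.exp (u * Real.exp (-k * t) * F t u * x)) →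
        ∀ ε ∈ Set.Ioc (0:ℝ) ε₀,
          (∫⁻ ω, ENNReal.ofReal (Real.exp (ε * |V ω - x| / Real.sqrt t)) ∂P) ≤
            ENNReal.ofReal (C * Real.exp (C * ε * x)) := by
  obtain ⟨ε₀, hε₀, C, hC, hbound⟩ := stmt17_general a k η ha.le hk.ne' hη F hF
  have hu₀ : 0 < 2 * k * (η ^ 2)⁻¹ * (1 - Real.exp (-k))⁻¹ := by
    have : 0 < 1 - Real.exp (-k) := sub_pos.2 (Real.exp_lt_one_iff.2 (neg_lt_zero.2 hk))
    positivity
  exact ⟨ε₀, hε₀, C, hC, fun Ω _ P _ V _ _ x hx t ht hV ↦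
    hbound Ω _ P V x hx t ht ((gt_mem_nhds hu₀).mono hV)⟩
end
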